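/- arXiv:1209.5840 — 2 statements merged into one kernel-verified Lean document; each statement's English description precedes it below -/
import Mathlib

section
/- Let S ⊆ ℝⁿ (n ≥ 2) be a d-set with n−1 < d < n, let 1 < p < ∞ and (n−d)/p < s < 1. Then there is a constant c > 0 (depending on n, d, p, s and S) such that for every f ∈ W^{s,p}(ℝⁿ) whose trace satisfies Tr_S f = 0 ℋᵈ-almost everywhere on S, one has (∫_{ℝⁿ} |f(x)|^p / dist(x,S)^{sp} dx)^{1/p} ≤ c ‖f‖_{W^{s,p}(ℝⁿ)}. -/
open MeasureTheory Metric Set Filter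
open scoped ENNReal NNReal Topology

noncomputable section

/-- ℝⁿ, with the sup-norm (given by the product metric on `Fin n → ℝ`). -/
abbrev Rn (n : ℕ) := Fin n → ℝ

/-- The Euclidean distance on `Rn n`. -/
def euclDist {n : ℕ} (x y : Rn n) : ℝ := Real.sqrt (∑ i, (x i - y i) ^ 2)

/-- `S` is an (Ahlfors) `d`-set with regularity constant `C`:
`C⁻¹ rᵈ ≤ ℋᵈ(Q(w,r) ∩ S) ≤ C rᵈ` for all `w ∈ S`, `0 < r ≤ 1`. -/
def IsDSet {n : ℕ} (S : Set (Rn n)) (d C : ℝ) : Prop :=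
  IsClosed S ∧ 1 < C ∧ ∀ w ∈ S, ∀ r : ℝ, 0 < r → r ≤ 1 →
    ENNReal.ofReal (C⁻¹ * r ^ d) ≤ μH[d] (closedBall w r ∩ S) ∧
      μH[d] (closedBall w r ∩ S) ≤ ENNReal.ofReal (C * r ^ d)

/-- `Tr_S f = 0` pointwise ℋᵈ-almost everywhere on `S`: for ℋᵈ-a.e. `x ∈ S`, the
limit of averages `⨍_{Q(x,r)} f` as `r → 0⁺` exists and equals `0`. -/
def TraceZero {n : ℕ} (S : Set (Rn n)) (d : ℝ) (f : Rn n → ℝ) : Prop :=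
  ∀ᵐ x ∂(μH[d]).restrict S,
    Tendsto (fun r : ℝ => ⨍ y in closedBall x r, f y) (𝓝[>] 0) (𝓝 0)

/-- The `L^p` norm (as a value in `[0,∞]`). -/
def lpNormR {n : ℕ} (p : ℝ) (f : Rn n → ℝ) : ℝ≥0∞ :=
  (∫⁻ x, ENNReal.ofReal |f x| ^ p) ^ (1 / p)

/-- The Gagliardo seminorm of `W^{s,p}(ℝⁿ)` (Euclidean distance in the kernel). -/
def gagliardo {n : ℕ} (s p : ℝ) (f : Rn n → ℝ) : ℝ≥0∞ :=
  (∫⁻ x, ∫⁻ y, ENNReal.ofReal (|f x - f y| ^ p / euclDist x y ^ (s * p + n))) ^ (1 / p)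

/-- The norm of the fractional Sobolev space `W^{s,p}(ℝⁿ)`. -/
def sobolevNorm {n : ℕ} (s p : ℝ) (f : Rn n → ℝ) : ℝ≥0∞ :=
  lpNormR p f + gagliardo s p f

/-- The left hand side of the Hardy inequality: `(∫ |f|^p / dist(x,S)^{sp} dx)^{1/p}`,
with the distance to `S` measured in the sup-norm. -/
def hardyLHS {n : ℕ} (S : Set (Rn n)) (s p : ℝ) (f : Rn n → ℝ) : ℝ≥0∞ :=
  (∫⁻ x, ENNReal.ofReal (|f x| ^ p / infDist x S ^ (s * p))) ^ (1 / p)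

/-- Powers of two as extended nonnegative reals. -/
def W (t : ℝ) : ℝ≥0∞ := ENNReal.ofReal ((2:ℝ) ^ t)

lemma W_add (s t : ℝ) : W (s + t) = W s * W t := by
  unfold W
  rw [← ENNReal.ofReal_mul (by positivity), Real.rpow_add (by norm_num)]

lemma W_ne_top (t : ℝ) : W t ≠ ⊤ := ENNReal.ofReal_ne_top

lemma W_zero : W 0 = 1 := by simp [W]

lemma W_pos (t : ℝ) : 0 < W t := by
  unfold W; rw [ENNReal.ofReal_pos]; positivity

lemma W_inv (t : ℝ) : (W t)⁻¹ = W (-t) := by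
  unfold W
  rw [← ENNReal.ofReal_inv_of_pos (by positivity), Real.rpow_neg (by norm_num)]

lemma W_mono {s t : ℝ} (h : s ≤ t) : W s ≤ W t := by
  unfold W
  exact ENNReal.ofReal_le_ofReal (Real.rpow_le_rpow_of_exponent_le (by norm_num) h)

lemma W_rpow (t : ℝ) {p : ℝ} (hp : 0 ≤ p) : W t ^ p = W (t * p) := by
  unfold W
  rw [ENNReal.ofReal_rpow_of_nonneg (by positivity) hp, ← Real.rpow_mul (by norm_num)]

/-- The geometric series constant. -/
def Kg (η : ℝ) : ℝ≥0∞ := ∑' j : ℕ, W (-(η * j))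

lemma W_neg_lt_one {η : ℝ} (h : 0 < η) : W (-η) < 1 := by
  unfold W
  rw [ENNReal.ofReal_lt_one]
  exact Real.rpow_lt_one_of_one_lt_of_neg (by norm_num) (by linarith)

lemma W_nat (η : ℝ) (j : ℕ) : W (-(η * j)) = W (-η) ^ j := by
  rw [← ENNReal.rpow_natCast, W_rpow _ (by positivity)]
  congr 1; ring

lemma Kg_ne_top {η : ℝ} (h : 0 < η) : Kg η ≠ ⊤ := by
  unfold Kg
  simp_rw [W_nat]
  rw [ENNReal.tsum_geometric]
  rw [ENNReal.inv_ne_top]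
  exact (tsub_pos_of_lt (W_neg_lt_one h)).ne'

lemma sum_W_le (a : ℝ) (N : ℕ) :
    ∑ k ∈ Finset.range (N + 1), W (a * k) ≤ Kg a * W (a * N) := by
  rw [← Finset.sum_range_reflect]
  unfold Kg
  rw [← ENNReal.tsum_mul_right]
  refine le_trans (le_of_eq ?_) (ENNReal.sum_le_tsum (Finset.range (N+1)))
  refine Finset.sum_congr rfl fun j hj => ?_
  rw [← W_add]
  have : j ≤ N := by simpa [Nat.lt_succ_iff] using hj
  congr 1
  rw [show N + 1 - 1 - j = N - j by omega, Nat.cast_sub this]; ring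

lemma tsum_rpow_le {p η : ℝ} (hp : 1 < p) (a : ℕ → ℝ≥0∞) :
    (∑' j, a j) ^ p ≤ Kg (η / p) ^ p * ∑' j : ℕ, W (η * j) * a j ^ p := by
  set M := ∑' j : ℕ, W (η * j) * a j ^ p with hM
  have hp0 : 0 < p := by linarith
  have h1 : ∀ j, a j ≤ W (-(η / p * j)) * M ^ (1 / p) := by
    intro j
    have h2 : W (η * j) * a j ^ p ≤ M := ENNReal.le_tsum (f := fun j : ℕ => W (η * j) * a j ^ p) j
    have h3 := ENNReal.rpow_le_rpow h2 (z := 1 / p) (by positivity)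
    rw [ENNReal.mul_rpow_of_nonneg _ _ (by positivity), W_rpow _ (by positivity),
      ← ENNReal.rpow_mul, mul_one_div_cancel hp0.ne', ENNReal.rpow_one] at h3
    calc a j = W (-(η / p * j)) * (W (η * j * (1 / p)) * a j) := by
          rw [← mul_assoc, ← W_add]
          rw [show -(η / p * j) + η * j * (1 / p) = 0 by ring, W_zero, one_mul]
      _ ≤ _ := by gcongr
  have h4 : ∑' j, a j ≤ Kg (η / p) * M ^ (1 / p) := by
    unfold Kg
    rw [← ENNReal.tsum_mul_right]
    exact ENNReal.tsum_le_tsum h1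
  calc _ ≤ (Kg (η / p) * M ^ (1 / p)) ^ p := by gcongr
    _ = _ := by
      rw [ENNReal.mul_rpow_of_nonneg _ _ (by positivity), ← ENNReal.rpow_mul,
        one_div_mul_cancel hp0.ne', ENNReal.rpow_one]

lemma jensen {α : Type*} [MeasurableSpace α] (ν : Measure α) [IsProbabilityMeasure ν]
    {g : α → ℝ≥0∞} (hg : AEMeasurable g ν) {p : ℝ} (hp : 1 < p) :
    (∫⁻ x, g x ∂ν) ^ p ≤ ∫⁻ x, g x ^ p ∂ν := by
  have hpq := Real.HolderConjugate.conjExponent hp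
  have := ENNReal.lintegral_mul_le_Lp_mul_Lq ν hpq hg (g := fun _ => 1) (by fun_prop)
  simp at this
  calc _ ≤ ((∫⁻ x, g x ^ p ∂ν) ^ p⁻¹) ^ p := by gcongr
    _ = _ := by rw [← ENNReal.rpow_mul, inv_mul_cancel₀ (by linarith), ENNReal.rpow_one]

lemma avg_sub_le {n : ℕ} {f : Rn n → ℝ} (hf : Measurable f) {p : ℝ} (hp : 1 < p)
    {Q : Set (Rn n)} (hQ0 : volume Q ≠ 0) (hQ : volume Q ≠ ⊤) (hi : IntegrableOn f Q) (c : ℝ) :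
    ‖c - ⨍ y in Q, f y‖ₑ ^ p ≤ (volume Q)⁻¹ * ∫⁻ y in Q, ‖c - f y‖ₑ ^ p := by
  have : IsFiniteMeasure (volume.restrict Q) := ⟨by simpa using hQ.lt_top⟩
  have : NeZero (volume.restrict Q) := ⟨by simpa using hQ0⟩
  set ν := (volume.restrict Q univ)⁻¹ • volume.restrict Q with hν
  have : IsProbabilityMeasure ν := isProbabilityMeasureSMul
  have hi' : Integrable f ν := hi.smul_measure (by simpa using hQ0)
  have h1 : c - ⨍ y in Q, f y = ∫ y, (c - f y) ∂ν := by
    rw [integral_sub (integrable_const _) hi']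
    rw [integral_const, probReal_univ, one_smul]
    rfl
  rw [h1]
  calc _ ≤ (∫⁻ y, ‖c - f y‖ₑ ∂ν) ^ p := by
        gcongr; exact enorm_integral_le_lintegral_enorm _
    _ ≤ ∫⁻ y, ‖c - f y‖ₑ ^ p ∂ν := jensen ν (by fun_prop) hp
    _ = _ := by rw [hν, lintegral_smul_measure]; simp

/-- The difference kernel. -/
def Dk {n : ℕ} (p : ℝ) (f : Rn n → ℝ) (x y : Rn n) : ℝ≥0∞ := ‖f x - f y‖ₑ ^ p

/-- dyadic radius -/
def rad (k : ℕ) : ℝ := (2:ℝ) ^ (-(k:ℝ))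

lemma rad_pos (k : ℕ) : 0 < rad k := by unfold rad; positivity

lemma rad_succ (k : ℕ) : rad (k + 1) = rad k / 2 := by
  unfold rad
  push_cast
  rw [show -((k:ℝ) + 1) = -k - 1 by ring, Real.rpow_sub_one (by norm_num)]

lemma rad_le_one (k : ℕ) : rad k ≤ 1 :=
  Real.rpow_le_one_of_one_le_of_nonpos (by norm_num) (by simp)

lemma rad_eq (k : ℕ) : rad k = (1 / 2) ^ k := by
  unfold rad
  rw [Real.rpow_neg (by norm_num), Real.rpow_natCast]; simp

lemma rad_tendsto : Tendsto rad atTop (𝓝[>] 0) := by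
  rw [tendsto_nhdsWithin_iff]
  refine ⟨?_, Eventually.of_forall rad_pos⟩
  rw [show rad = fun k => (1 / 2 : ℝ) ^ k from funext rad_eq]
  exact tendsto_pow_atTop_nhds_zero_of_lt_one (by norm_num) (by norm_num)

lemma rpow_rad (k : ℕ) (a : ℝ) : rad k ^ a = (2:ℝ) ^ (-(a * k)) := by
  unfold rad
  rw [← Real.rpow_mul (by norm_num)]; congr 1; ring

lemma vol_ball {n : ℕ} (w : Rn n) (k : ℕ) (m : ℝ) :
    volume (closedBall w ((2:ℝ) ^ m * rad k)) = W ((n:ℝ) * (m + 1) - n * k) := by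
  rw [Real.volume_pi_closedBall _ (mul_pos (by positivity) (rad_pos k)).le]
  unfold W rad
  congr 1
  rw [← Real.rpow_add (by norm_num), Fintype.card_fin, ← Real.rpow_natCast]
  rw [show (2:ℝ) * 2 ^ (m + -(k:ℝ)) = 2 ^ (m + -(k:ℝ) + 1) by
    rw [Real.rpow_add_one (by norm_num)]; ring]
  rw [← Real.rpow_mul (by norm_num)]
  congr 1; ring

lemma vol_ball' {n : ℕ} (w : Rn n) (k : ℕ) :
    volume (closedBall w (rad k)) = W ((n:ℝ) - n * k) := by
  have := vol_ball w k 0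
  simpa using this

lemma vol_inv_le {n : ℕ} (w : Rn n) (k : ℕ) :
    (volume (closedBall w (rad k)))⁻¹ ≤ W (n * k) := by
  rw [vol_ball', W_inv]
  apply W_mono
  have : (0:ℝ) ≤ n := by positivity
  linarith

lemma integrableOn_ball {n : ℕ} {f : Rn n → ℝ} (hf : Measurable f) {p : ℝ} (hp : 1 < p)
    (h : ∫⁻ x, ‖f x‖ₑ ^ p ≠ ⊤) (w : Rn n) (r : ℝ) : IntegrableOn f (closedBall w r) := by
  have hm : MemLp f (ENNReal.ofReal p) volume := by
    refine ⟨hf.aestronglyMeasurable, ?_⟩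
    rw [eLpNorm_eq_lintegral_rpow_enorm_toReal (by simp; linarith) (by simp)]
    rw [ENNReal.toReal_ofReal (by linarith)]
    exact ENNReal.rpow_lt_top_of_nonneg (by positivity) h
  exact (hm.locallyIntegrable (by simp; linarith)).integrableOn_isCompact (isCompact_closedBall w r)

/-- the double integral on a ball -/
def Vk {n : ℕ} (p : ℝ) (f : Rn n → ℝ) (k : ℕ) (w : Rn n) : ℝ≥0∞ :=
  ∫⁻ y in closedBall w (rad k), ∫⁻ z in closedBall w (rad k), Dk p f y z

lemma chain_le {n : ℕ} {f : Rn n → ℝ} (hf : Measurable f) {p : ℝ} (hp : 1 < p)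
    (h : ∫⁻ x, ‖f x‖ₑ ^ p ≠ ⊤) (w : Rn n) (k : ℕ) :
    edist (⨍ y in closedBall w (rad k), f y) (⨍ y in closedBall w (rad (k+1)), f y) ^ p
      ≤ W (n + 2 * n * k) * Vk p f k w := by
  have hv0 : ∀ k, volume (closedBall w (rad k)) ≠ 0 := fun k => by
    rw [vol_ball']; exact (W_pos _).ne'
  have hv : ∀ k, volume (closedBall w (rad k)) ≠ ⊤ := fun k => by
    rw [vol_ball']; exact W_ne_top _
  rw [edist_comm, edist_eq_enorm_sub]
  have hsub : closedBall w (rad (k+1)) ⊆ closedBall w (rad k) := by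
    apply closedBall_subset_closedBall
    rw [rad_succ]; linarith [rad_pos k]
  refine (avg_sub_le hf hp (hv0 k) (hv k) (integrableOn_ball hf hp h w _) _).trans ?_
  have h2 : ∀ y, ‖(⨍ y in closedBall w (rad (k+1)), f y) - f y‖ₑ ^ p ≤
      W (n * (k+1 : ℕ)) * ∫⁻ z in closedBall w (rad k), Dk p f y z := by
    intro y
    rw [enorm_sub_rev]
    refine (avg_sub_le hf hp (hv0 (k+1)) (hv (k+1)) (integrableOn_ball hf hp h w _) _).trans ?_
    exact mul_le_mul' (vol_inv_le w _) (lintegral_mono_set hsub)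
  calc _ ≤ W (n * k) * ∫⁻ y in closedBall w (rad k),
          (W (n * (k+1 : ℕ)) * ∫⁻ z in closedBall w (rad k), Dk p f y z) :=
        mul_le_mul' (vol_inv_le w _) (lintegral_mono h2)
    _ = _ := by
      rw [lintegral_const_mul' _ _ (W_ne_top _), ← mul_assoc, ← W_add]
      unfold Vk
      congr 2
      push_cast; ring

lemma pointwise {n : ℕ} {f : Rn n → ℝ} (hf : Measurable f) {p : ℝ} (hp : 1 < p) (η : ℝ)
    (h : ∫⁻ x, ‖f x‖ₑ ^ p ≠ ⊤) (w x : Rn n) (i : ℕ) (hxw : dist x w ≤ 2 * rad i)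
    (hl : Tendsto (fun r : ℝ => ⨍ y in closedBall w r, f y) (𝓝[>] 0) (𝓝 0)) :
    ‖f x‖ₑ ^ p ≤ 2 ^ (p - 1) * (W (n * i) * ∫⁻ y in closedBall x (4 * rad i), Dk p f x y) +
      2 ^ (p - 1) * (Kg (η / p) ^ p * ∑' j : ℕ, W (η * j) * (W (n + 2 * n * (i + j : ℕ)) *
        Vk p f (i + j) w)) := by
  have hv0 : ∀ k, volume (closedBall w (rad k)) ≠ 0 := fun k => by
    rw [vol_ball']; exact (W_pos _).ne'
  have hv : ∀ k, volume (closedBall w (rad k)) ≠ ⊤ := fun k => by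
    rw [vol_ball']; exact W_ne_top _
  set m : ℕ → ℝ := fun k => ⨍ y in closedBall w (rad k), f y with hm
  have hm0 : Tendsto m atTop (𝓝 0) := hl.comp rad_tendsto
  have h1 := edist_le_tsum_of_edist_le_of_tendsto (f := m) (fun k => edist (m k) (m (k+1)))
    (fun k => le_rfl) hm0 i
  rw [edist_zero_right] at h1
  have h2 : ‖f x‖ₑ ≤ ‖f x - m i‖ₑ + ‖m i‖ₑ := by
    calc _ = ‖(f x - m i) + m i‖ₑ := by simp
      _ ≤ _ := enorm_add_le _ _
  rw [← mul_add]
  calc _ ≤ (‖f x - m i‖ₑ + ∑' j, edist (m (i + j)) (m (i + j + 1))) ^ p := by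
        gcongr; exact h2.trans (by gcongr)
    _ ≤ 2 ^ (p - 1) * (‖f x - m i‖ₑ ^ p + (∑' j, edist (m (i + j)) (m (i + j + 1))) ^ p) :=
        ENNReal.rpow_add_le_mul_rpow_add_rpow _ _ hp.le
    _ ≤ _ := by
      gcongr
      · refine (avg_sub_le hf hp (hv0 i) (hv i) (integrableOn_ball hf hp h w _) _).trans ?_
        refine mul_le_mul' (vol_inv_le w _) (lintegral_mono_set ?_)
        apply closedBall_subset_closedBall'
        rw [dist_comm] at hxw
        linarith [rad_pos i]
      · refine (tsum_rpow_le (η := η) hp _).trans ?_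
        gcongr with j
        exact chain_le hf hp h w _

lemma meas_ball_lintegral {n : ℕ} (ν : Measure (Rn n)) [SFinite ν] (r : ℝ)
    {G : Rn n → Rn n → ℝ≥0∞} (hG : Measurable (Function.uncurry G)) :
    Measurable fun x => ∫⁻ y in closedBall x r, G x y ∂ν := by
  have h : ∀ x, ∫⁻ y in closedBall x r, G x y ∂ν =
      ∫⁻ y, {q : Rn n × Rn n | dist q.2 q.1 ≤ r}.indicator (Function.uncurry G) (x, y) ∂ν := by
    intro x
    rw [← lintegral_indicator measurableSet_closedBall]
    rfl
  simp_rw [h]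
  apply Measurable.lintegral_prod_right'
  apply hG.indicator
  exact (isClosed_le (by fun_prop) (by fun_prop)).measurableSet

lemma swap_ball {n : ℕ} (μ ν : Measure (Rn n)) [SFinite μ] [SFinite ν] (r : ℝ)
    {g : Rn n → ℝ≥0∞} (hg : Measurable g) :
    ∫⁻ w, ∫⁻ y in closedBall w r, g y ∂ν ∂μ = ∫⁻ y, g y * μ (closedBall y r) ∂ν := by
  have h : ∀ w, ∫⁻ y in closedBall w r, g y ∂ν =
      ∫⁻ y, {q : Rn n × Rn n | dist q.2 q.1 ≤ r}.indicator (fun q => g q.2) (w, y) ∂ν := by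
    intro x
    rw [← lintegral_indicator measurableSet_closedBall]
    rfl
  simp_rw [h]
  rw [lintegral_lintegral_swap]
  · refine lintegral_congr fun y => ?_
    have : ∀ w, {q : Rn n × Rn n | dist q.2 q.1 ≤ r}.indicator (fun q => g q.2) (w, y) =
        (closedBall y r).indicator (fun _ => g y) w := by
      intro w
      simp only [indicator, mem_ofPred_eq, mem_closedBall, dist_comm w y]
    simp_rw [this]
    rw [lintegral_indicator measurableSet_closedBall, setLIntegral_const]
  · apply Measurable.aemeasurable
    apply Measurable.indicator (by fun_prop)
    exact (isClosed_le (by fun_prop) (by fun_prop)).measurableSet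

lemma meas_Dk {n : ℕ} (p : ℝ) {f : Rn n → ℝ} (hf : Measurable f) :
    Measurable (Function.uncurry (Dk p f)) := by
  unfold Dk Function.uncurry
  fun_prop

/-- local difference integral -/
def Jk {n : ℕ} (p : ℝ) (f : Rn n → ℝ) (k : ℕ) (x : Rn n) : ℝ≥0∞ :=
  ∫⁻ y in closedBall x (4 * rad k), Dk p f x y

lemma meas_Jk {n : ℕ} (p : ℝ) {f : Rn n → ℝ} (hf : Measurable f) (k : ℕ) :
    Measurable (Jk p f k) := meas_ball_lintegral _ _ (meas_Dk p hf)

/-- integral of the local difference integral -/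
def Uk {n : ℕ} (p : ℝ) (f : Rn n → ℝ) (k : ℕ) (w : Rn n) : ℝ≥0∞ :=
  ∫⁻ y in closedBall w (rad k), Jk p f k y

lemma meas_Uk {n : ℕ} (p : ℝ) {f : Rn n → ℝ} (hf : Measurable f) (k : ℕ) :
    Measurable (Uk p f k) :=
  meas_ball_lintegral _ _ (G := fun _ y => Jk p f k y) ((meas_Jk p hf k).comp measurable_snd)

lemma Vk_le_Uk {n : ℕ} (p : ℝ) (f : Rn n → ℝ) (k : ℕ) (w : Rn n) :
    Vk p f k w ≤ Uk p f k w := by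
  unfold Vk Uk
  refine setLIntegral_mono' measurableSet_closedBall fun y hy => ?_
  refine lintegral_mono_set ?_
  apply closedBall_subset_closedBall'
  rw [mem_closedBall, dist_comm] at hy
  linarith [rad_pos k]

/-- The total difference integral at scale k -/
def Ik {n : ℕ} (p : ℝ) (f : Rn n → ℝ) (k : ℕ) : ℝ≥0∞ := ∫⁻ x, Jk p f k x

lemma Uk_int {n : ℕ} (μ : Measure (Rn n)) [SFinite μ] (p : ℝ) {f : Rn n → ℝ} (hf : Measurable f)
    (k : ℕ) (U : ℝ≥0∞) (hU : ∀ y, μ (closedBall y (rad k)) ≤ U) :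
    ∫⁻ w, Uk p f k w ∂μ ≤ U * Ik p f k := by
  unfold Uk
  rw [swap_ball μ volume _ (meas_Jk p hf k)]
  unfold Ik
  rw [← lintegral_const_mul _ (meas_Jk p hf k)]
  refine lintegral_mono fun y => ?_
  rw [mul_comm]
  exact mul_le_mul_left (hU y) _

/-- weighted chain sum -/
def Rk {n : ℕ} (p η : ℝ) (f : Rn n → ℝ) (i : ℕ) (w : Rn n) : ℝ≥0∞ :=
  ∑' j : ℕ, W (η * j) * (W (n + 2 * n * (i + j : ℕ)) * Uk p f (i + j) w)

lemma meas_Rk {n : ℕ} (p η : ℝ) {f : Rn n → ℝ} (hf : Measurable f) (i : ℕ) :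
    Measurable (Rk p η f i) := by
  unfold Rk
  refine Measurable.tsum fun j => ?_
  exact ((meas_Uk p hf _).const_mul _).const_mul _

lemma avg_const {α : Type*} [MeasurableSpace α] (μ : Measure α) (E : Set α)
    (hE0 : μ E ≠ 0) (hE : μ E ≠ ⊤) (c T : ℝ≥0∞) (R : α → ℝ≥0∞)
    (h : ∀ᵐ w ∂(μ.restrict E), c ≤ T + R w) : c ≤ T + (μ E)⁻¹ * ∫⁻ w in E, R w ∂μ := by
  have h1 := lintegral_mono_ae h
  rw [lintegral_add_left measurable_const, setLIntegral_const, setLIntegral_const] at h1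
  calc c = (μ E)⁻¹ * (c * μ E) := by
        rw [mul_comm c, ← mul_assoc, ENNReal.inv_mul_cancel hE0 hE, one_mul]
    _ ≤ (μ E)⁻¹ * (T * μ E + ∫⁻ w in E, R w ∂μ) := by gcongr
    _ = _ := by
      rw [mul_add, mul_comm T, ← mul_assoc, ENNReal.inv_mul_cancel hE0 hE, one_mul]

/-- the majorant -/
def Phi {n : ℕ} (μ : Measure (Rn n)) (p η d c : ℝ) (f : Rn n → ℝ) (i : ℕ) (x : Rn n) : ℝ≥0∞ :=
  2 ^ (p - 1) * (W (n * i) * Jk p f i x) +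
    ENNReal.ofReal c * W (d * i) * (∫⁻ w in closedBall x (2 * rad i),
      2 ^ (p - 1) * (Kg (η / p) ^ p * Rk p η f i w) ∂μ)

lemma avg_bound {n : ℕ} (μ : Measure (Rn n)) [IsLocallyFiniteMeasure μ] {f : Rn n → ℝ}
    (hf : Measurable f) {p : ℝ} (hp : 1 < p) (η d c : ℝ) (hc : 0 < c)
    (h : ∫⁻ x, ‖f x‖ₑ ^ p ≠ ⊤) (x w₀ : Rn n) (i : ℕ) (hx : dist w₀ x ≤ rad i)
    (hμ : ENNReal.ofReal c⁻¹ * W (-(d * i)) ≤ μ (closedBall w₀ (rad i)))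
    (htr : ∀ᵐ w ∂μ, Tendsto (fun r : ℝ => ⨍ y in closedBall w r, f y) (𝓝[>] 0) (𝓝 0)) :
    ‖f x‖ₑ ^ p ≤ Phi μ p η d c f i x := by
  have hle : ENNReal.ofReal c⁻¹ * W (-(d * i)) ≤ μ (closedBall x (2 * rad i)) :=
    hμ.trans (measure_mono (closedBall_subset_closedBall' (by linarith)))
  have hpos : 0 < ENNReal.ofReal c⁻¹ * W (-(d * i)) :=
    ENNReal.mul_pos (by simpa using hc) (W_pos _).ne'
  have hinv : (μ (closedBall x (2 * rad i)))⁻¹ ≤ ENNReal.ofReal c * W (d * i) := by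
    refine (ENNReal.inv_le_inv.2 hle).trans (le_of_eq ?_)
    rw [ENNReal.mul_inv (Or.inr (W_ne_top _)) (Or.inl ENNReal.ofReal_ne_top), W_inv,
      ENNReal.ofReal_inv_of_pos hc, inv_inv, neg_neg]
  refine (avg_const μ (closedBall x (2 * rad i)) (hpos.trans_le hle).ne'
    (isCompact_closedBall _ _).measure_lt_top.ne _
    (2 ^ (p - 1) * (W (n * i) * Jk p f i x))
    (fun w => 2 ^ (p - 1) * (Kg (η / p) ^ p * Rk p η f i w)) ?_).trans ?_
  · filter_upwards [ae_restrict_of_ae htr, ae_restrict_mem measurableSet_closedBall] with w hw hwx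
    rw [mem_closedBall, dist_comm] at hwx
    refine (pointwise hf hp η h w x i hwx hw).trans ?_
    unfold Jk Rk
    gcongr
    exact Vk_le_Uk _ _ _ _
  · unfold Phi
    gcongr

lemma meas_Phi {n : ℕ} (μ : Measure (Rn n)) [SFinite μ] (p η d c : ℝ) {f : Rn n → ℝ}
    (hf : Measurable f) (i : ℕ) : Measurable (Phi μ p η d c f i) := by
  unfold Phi
  refine Measurable.add (((meas_Jk p hf i).const_mul _).const_mul _) (Measurable.const_mul ?_ _)
  exact meas_ball_lintegral μ _
    (G := fun _ w => 2 ^ (p - 1) * (Kg (η / p) ^ p * Rk p η f i w))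
    ((((meas_Rk p η hf i).const_mul _).const_mul _).comp measurable_snd)

lemma Phi_int {n : ℕ} (μ : Measure (Rn n)) [SFinite μ] {p η d c s : ℝ} {f : Rn n → ℝ}
    (hf : Measurable f) (i : ℕ) (U : ℝ≥0∞)
    (hη : 2 * η = s * p + d - n)
    (hU : ∀ k, i ≤ k → ∀ y, μ (closedBall y (rad k)) ≤ U * W (-(d * k))) :
    W (s * p * (i + 1)) * ∫⁻ x, Phi μ p η d c f i x ≤
      2 ^ (p - 1) * W (s * p) * (W ((s * p + n) * i) * Ik p f i) +
      2 ^ (p - 1) * ENNReal.ofReal c * Kg (η / p) ^ p * U * W (3 * n + s * p) *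
        ∑' j : ℕ, W (-(η * j)) * (W ((s * p + n) * (i + j : ℕ)) * Ik p f (i + j)) := by
  have hmeas : Measurable fun x => ∫⁻ w in closedBall x (2 * rad i),
      2 ^ (p - 1) * (Kg (η / p) ^ p * Rk p η f i w) ∂μ := meas_ball_lintegral μ _
      (G := fun _ w => 2 ^ (p - 1) * (Kg (η / p) ^ p * Rk p η f i w))
      ((((meas_Rk p η hf i).const_mul _).const_mul _).comp measurable_snd)
  unfold Phi
  rw [lintegral_add_left (((meas_Jk p hf i).const_mul _).const_mul _),
    lintegral_const_mul _ ((meas_Jk p hf i).const_mul _),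
    lintegral_const_mul _ (meas_Jk p hf i),
    lintegral_const_mul _ hmeas,
    swap_ball volume μ _ (((meas_Rk p η hf i).const_mul _).const_mul _), mul_add]
  have hv : ∀ w : Rn n, volume (closedBall w (2 * rad i)) = W (2 * n - n * i) := by
    intro w
    have := vol_ball w i 1
    rw [Real.rpow_one] at this
    rw [this]; congr 1; ring
  simp_rw [hv]
  refine add_le_add (le_of_eq ?_) ?_
  · change _ * (_ * (_ * Ik p f i)) = _
    rw [show W (s * p * (i + 1)) * (2 ^ (p - 1) * (W (n * i) * Ik p f i)) =
      2 ^ (p - 1) * (W (s * p * (i + 1)) * W (n * i)) * Ik p f i by ring, ← W_add,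
      show 2 ^ (p - 1) * W (s * p) * (W ((s * p + n) * i) * Ik p f i) =
      2 ^ (p - 1) * (W (s * p) * W ((s * p + n) * i)) * Ik p f i by ring, ← W_add]
    congr 3; ring
  · have hR : ∫⁻ w, Rk p η f i w ∂μ ≤ ∑' j : ℕ, W (η * j) * (W (n + 2 * n * (i + j : ℕ)) *
        (U * W (-(d * (i + j : ℕ))) * Ik p f (i + j))) := by
      unfold Rk
      rw [lintegral_tsum (fun j => (((meas_Uk p hf _).const_mul _).const_mul _).aemeasurable)]
      refine ENNReal.tsum_le_tsum fun j => ?_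
      rw [lintegral_const_mul _ ((meas_Uk p hf _).const_mul _),
        lintegral_const_mul _ (meas_Uk p hf _)]
      gcongr
      exact Uk_int μ p hf _ _ (hU _ (by omega))
    rw [lintegral_mul_const _ (((meas_Rk p η hf i).const_mul _).const_mul _),
      lintegral_const_mul _ ((meas_Rk p η hf i).const_mul _),
      lintegral_const_mul _ (meas_Rk p η hf i)]
    refine (mul_le_mul_right (mul_le_mul_right (mul_le_mul_left (mul_le_mul_right
      (mul_le_mul_right hR _) _) _) _) _).trans (le_of_eq ?_)
    set A := Kg (η / p) ^ p
    set B := (2:ℝ≥0∞) ^ (p - 1)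
    set Cc := ENNReal.ofReal c
    rw [← ENNReal.tsum_mul_left, ← ENNReal.tsum_mul_left, ← ENNReal.tsum_mul_right,
      ← ENNReal.tsum_mul_left, ← ENNReal.tsum_mul_left, ← ENNReal.tsum_mul_left]
    refine tsum_congr fun j => ?_
    calc _ = B * Cc * A * U * Ik p f (i + j) * (W (s * p * (i + 1)) * (W (d * i) *
          (W (2 * n - n * i) * (W (η * j) * (W (n + 2 * n * (i + j : ℕ)) *
            W (-(d * (i + j : ℕ)))))))) := by ring
      _ = B * Cc * A * U * Ik p f (i + j) * (W (3 * n + s * p) * (W (-(η * j)) *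
          W ((s * p + n) * (i + j : ℕ)))) := by
        simp_rw [← W_add]
        congr 2
        push_cast
        linear_combination (j:ℝ) * hη
      _ = _ := by ring

lemma euclDist_le {n : ℕ} (x y : Rn n) : euclDist x y ≤ n * dist x y := by
  unfold euclDist
  rw [Real.sqrt_le_iff]
  refine ⟨by positivity, ?_⟩
  have h : ∀ i, (x i - y i) ^ 2 ≤ dist x y ^ 2 := fun i => by
    rw [← sq_abs (x i - y i), ← Real.dist_eq]
    exact pow_le_pow_left₀ dist_nonneg (dist_le_pi_dist x y i) 2
  calc ∑ i, (x i - y i) ^ 2 ≤ ∑ _i : Fin n, dist x y ^ 2 := Finset.sum_le_sum fun i _ => h i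
    _ = n * dist x y ^ 2 := by simp
    _ ≤ (n * dist x y) ^ 2 := by
      rw [mul_pow]
      gcongr
      have : n ≤ n ^ 2 := Nat.le_self_pow (by norm_num) n
      exact_mod_cast this

lemma euclDist_pos {n : ℕ} {x y : Rn n} (h : x ≠ y) : 0 < euclDist x y := by
  unfold euclDist
  apply Real.sqrt_pos.2
  obtain ⟨i, hi⟩ := Function.ne_iff.1 h
  refine Finset.sum_pos' (fun j _ => sq_nonneg _) ⟨i, Finset.mem_univ _, ?_⟩
  have : x i - y i ≠ 0 := sub_ne_zero.2 hi
  positivity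

lemma kernel_sum {n : ℕ} {p a : ℝ} (hp : 1 < p) (ha : 0 < a) (f : Rn n → ℝ) (x y : Rn n) :
    ∑' k : ℕ, W (a * k) * (closedBall x (4 * rad k)).indicator (Dk p f x) y ≤
      Kg a * ENNReal.ofReal ((4 * n) ^ a) *
        ENNReal.ofReal (|f x - f y| ^ p / euclDist x y ^ a) := by
  have hp0 : 0 < p := by linarith
  by_cases hxy : f x = f y
  · have h0 : Dk p f x y = 0 := by simp [Dk, hxy, hp0]
    have : ∀ k : ℕ, (closedBall x (4 * rad k)).indicator (Dk p f x) y = 0 := by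
      intro k; simp [indicator, h0]
    simp [this]
  have hne : x ≠ y := fun h => hxy (by rw [h])
  have he := euclDist_pos hne
  have hδ : 0 < dist x y := dist_pos.2 hne
  have hn : 0 < (n : ℝ) := by
    have := he.trans_le (euclDist_le x y)
    by_contra hcon
    have : (n : ℝ) = 0 := le_antisymm (not_lt.1 hcon) (by positivity)
    have h2 := euclDist_le x y
    rw [this] at h2
    linarith
  set A : Set ℕ := {k | dist x y ≤ 4 * rad k} with hA
  have hb : BddAbove A := by
    have h1 : Tendsto (fun k => 4 * rad k) atTop (𝓝 (4 * 0)) :=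
      (rad_tendsto.mono_right nhdsWithin_le_nhds).const_mul 4
    rw [mul_zero] at h1
    obtain ⟨N, hN⟩ := eventually_atTop.1 (h1.eventually (gt_mem_nhds hδ))
    refine ⟨N, fun k hk => ?_⟩
    by_contra hcon
    exact absurd (hN k (by omega)) (not_lt.2 hk)
  rcases A.eq_empty_or_nonempty with hemp | hnon
  · have : ∀ k : ℕ, (closedBall x (4 * rad k)).indicator (Dk p f x) y = 0 := by
      intro k
      apply indicator_of_notMem
      intro hk
      have : k ∈ A := by rw [mem_closedBall, dist_comm] at hk; exact hk
      rw [hemp] at this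
      exact this
    simp [this]
  set N := sSup A
  have hNA : dist x y ≤ 4 * rad N := Nat.sSup_mem hnon hb
  have h1 : ∑' k : ℕ, W (a * k) * (closedBall x (4 * rad k)).indicator (Dk p f x) y ≤
      (∑ k ∈ Finset.range (N + 1), W (a * k)) * Dk p f x y := by
    rw [tsum_eq_sum (s := Finset.range (N + 1)), Finset.sum_mul]
    · gcongr with k
      exact indicator_le_self _ _ _
    · intro k hk
      rw [indicator_of_notMem, mul_zero]
      intro hk'
      have : k ∈ A := by rw [mem_closedBall, dist_comm] at hk'; exact hk'
      have := le_csSup hb this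
      simp at hk
      omega
  refine h1.trans ?_
  have h2 : W (a * N) * Dk p f x y ≤ ENNReal.ofReal ((4 * n) ^ a) *
        ENNReal.ofReal (|f x - f y| ^ p / euclDist x y ^ a) := by
    unfold Dk W
    rw [Real.enorm_eq_ofReal_abs, ENNReal.ofReal_rpow_of_nonneg (abs_nonneg _) hp0.le,
      ← ENNReal.ofReal_mul (by positivity), ← ENNReal.ofReal_mul (by positivity)]
    apply ENNReal.ofReal_le_ofReal
    have h3 : (2:ℝ) ^ (a * N) ≤ (4 * n) ^ a / euclDist x y ^ a := by
      rw [← Real.div_rpow (by positivity) he.le, mul_comm a, Real.rpow_mul (by norm_num)]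
      apply Real.rpow_le_rpow (by positivity) _ ha.le
      rw [le_div_iff₀ he]
      have h4 : (2:ℝ) ^ (N:ℝ) * rad N = 1 := by
        unfold rad; rw [← Real.rpow_add (by norm_num)]; simp
      calc (2:ℝ) ^ (N:ℝ) * euclDist x y ≤ (2:ℝ) ^ (N:ℝ) * (n * (4 * rad N)) := by
            gcongr
            exact (euclDist_le x y).trans (by gcongr)
        _ = 4 * n * ((2:ℝ) ^ (N:ℝ) * rad N) := by ring
        _ = 4 * n := by rw [h4, mul_one]
    calc _ ≤ (4 * n) ^ a / euclDist x y ^ a * |f x - f y| ^ p := by gcongr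
      _ = _ := by ring
  calc _ ≤ Kg a * W (a * N) * Dk p f x y := by gcongr; exact sum_W_le a N
    _ ≤ _ := by rw [mul_assoc, mul_assoc]; gcongr

lemma Ik_sum {n : ℕ} {p a : ℝ} (hp : 1 < p) (ha : 0 < a) {f : Rn n → ℝ} (hf : Measurable f) :
    ∑' k : ℕ, W (a * k) * Ik p f k ≤ Kg a * ENNReal.ofReal ((4 * n) ^ a) *
      ∫⁻ x, ∫⁻ y, ENNReal.ofReal (|f x - f y| ^ p / euclDist x y ^ a) := by
  have hK : Kg a * ENNReal.ofReal ((4 * n) ^ a) ≠ ⊤ :=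
    ENNReal.mul_ne_top (Kg_ne_top ha) ENNReal.ofReal_ne_top
  have hmD : ∀ x, Measurable (Dk p f x) := fun x => by unfold Dk; fun_prop
  unfold Ik
  simp_rw [← lintegral_const_mul _ (meas_Jk p hf _)]
  rw [← lintegral_tsum (fun k => ((meas_Jk p hf k).const_mul _).aemeasurable),
    ← lintegral_const_mul' _ _ hK]
  refine lintegral_mono fun x => ?_
  rw [← lintegral_const_mul' _ _ hK]
  unfold Jk
  simp_rw [← lintegral_indicator measurableSet_closedBall]
  have : ∀ k : ℕ, W (a * k) * ∫⁻ y, (closedBall x (4 * rad k)).indicator (fun y => Dk p f x y) y =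
      ∫⁻ y, W (a * k) * (closedBall x (4 * rad k)).indicator (Dk p f x) y := fun k =>
    (lintegral_const_mul _ ((hmD x).indicator measurableSet_closedBall)).symm
  simp_rw [this]
  rw [← lintegral_tsum (fun k => (((hmD x).indicator
    measurableSet_closedBall).const_mul _).aemeasurable)]
  exact lintegral_mono fun y => kernel_sum hp ha f x y

lemma dset_locFin {n : ℕ} {S : Set (Rn n)} {d C : ℝ} (hS : IsDSet S d C) :
    IsLocallyFiniteMeasure ((μH[d] : Measure (Rn n)).restrict S) := by
  refine ⟨fun x => ?_⟩
  by_cases hx : x ∈ S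
  · refine ⟨closedBall x 1, closedBall_mem_nhds x one_pos, ?_⟩
    rw [Measure.restrict_apply measurableSet_closedBall]
    exact (hS.2.2 x hx 1 one_pos le_rfl).2.trans_lt ENNReal.ofReal_lt_top
  · refine ⟨Sᶜ, hS.1.isOpen_compl.mem_nhds hx, ?_⟩
    rw [Measure.restrict_apply hS.1.isOpen_compl.measurableSet]
    simp

lemma dset_lower {n : ℕ} {S : Set (Rn n)} {d C : ℝ} (hS : IsDSet S d C) {w : Rn n} (hw : w ∈ S)
    (k : ℕ) : ENNReal.ofReal C⁻¹ * W (-(d * k)) ≤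
      (μH[d] : Measure (Rn n)).restrict S (closedBall w (rad k)) := by
  rw [Measure.restrict_apply measurableSet_closedBall]
  have hC : 0 ≤ C⁻¹ := inv_nonneg.2 (by linarith [hS.2.1])
  have := (hS.2.2 w hw (rad k) (rad_pos k) (rad_le_one k)).1
  rwa [ENNReal.ofReal_mul hC, rpow_rad] at this

lemma dset_upper {n : ℕ} {S : Set (Rn n)} {d C : ℝ} (hS : IsDSet S d C) (y : Rn n)
    (k : ℕ) (hk : 1 ≤ k) : (μH[d] : Measure (Rn n)).restrict S (closedBall y (rad k)) ≤
      ENNReal.ofReal C * W d * W (-(d * k)) := by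
  rw [Measure.restrict_apply measurableSet_closedBall]
  rcases (closedBall y (rad k) ∩ S).eq_empty_or_nonempty with h | ⟨w, hwy, hwS⟩
  · rw [h]; simp
  obtain ⟨m, rfl⟩ : ∃ m, k = m + 1 := ⟨k - 1, by omega⟩
  have hC : 0 ≤ C := by linarith [hS.2.1]
  have h1 := (hS.2.2 w hwS (rad m) (rad_pos m) (rad_le_one m)).2
  rw [ENNReal.ofReal_mul hC, rpow_rad] at h1
  refine (measure_mono (inter_subset_inter_left _ ?_)).trans (h1.trans (le_of_eq ?_))
  · apply closedBall_subset_closedBall'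
    rw [mem_closedBall, dist_comm] at hwy
    rw [rad_succ] at *
    linarith
  · rw [mul_assoc, ← W_add]
    unfold W
    congr 3
    push_cast; ring

lemma hardy_pointwise {n : ℕ} {S : Set (Rn n)} {d C : ℝ} (hS : IsDSet S d C) {f : Rn n → ℝ}
    (hf : Measurable f) {p s : ℝ} (hp : 1 < p) (hs : 0 < s) (η : ℝ)
    (h : ∫⁻ x, ‖f x‖ₑ ^ p ≠ ⊤) (htr : TraceZero S d f) (x : Rn n) :
    ENNReal.ofReal (|f x| ^ p / infDist x S ^ (s * p)) ≤ W (s * p) * ‖f x‖ₑ ^ p +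
      ∑' i : ℕ, W (s * p * ((i + 1 : ℕ) + 1)) *
        Phi ((μH[d] : Measure (Rn n)).restrict S) p η d C f (i + 1) x := by
  have hp0 : 0 < p := by linarith
  have hsp : 0 < s * p := by positivity
  have := dset_locFin hS
  have key : ∀ k : ℕ, rad (k + 1) < infDist x S →
      ENNReal.ofReal (|f x| ^ p / infDist x S ^ (s * p)) ≤ W (s * p * (k + 1)) * ‖f x‖ₑ ^ p := by
    intro k hk
    unfold W
    rw [Real.enorm_eq_ofReal_abs, ENNReal.ofReal_rpow_of_nonneg (abs_nonneg _) hp0.le,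
      ← ENNReal.ofReal_mul (by positivity)]
    apply ENNReal.ofReal_le_ofReal
    have hpos := rad_pos (k + 1)
    have h1 : rad (k + 1) ^ (s * p) ≤ infDist x S ^ (s * p) := by gcongr
    calc |f x| ^ p / infDist x S ^ (s * p) ≤ |f x| ^ p / rad (k + 1) ^ (s * p) := by gcongr
      _ = _ := by
        rw [rpow_rad, Real.rpow_neg (by norm_num)]
        push_cast
        field_simp
  rcases lt_or_ge (1 / 2) (infDist x S) with h1 | h1
  · refine le_trans ?_ le_self_add
    have := key 0 (by rw [rad_eq]; simpa using h1)
    simpa using this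
  rcases (infDist_nonneg (x := x) (s := S)).eq_or_lt with h0 | h0
  · rw [← h0, Real.zero_rpow hsp.ne']; simp
  have hne : S.Nonempty := by
    by_contra hcon
    rw [not_nonempty_iff_eq_empty] at hcon
    rw [hcon] at h0; simp at h0
  obtain ⟨m, hm1, hm2⟩ := exists_nat_pow_near_of_lt_one (x := 2 * infDist x S) (y := 1 / 2)
    (by linarith) (by linarith) (by norm_num) (by norm_num)
  obtain ⟨w, hwS, hw⟩ := hS.1.exists_infDist_eq_dist hne x
  refine le_trans ?_ le_add_self
  refine le_trans ?_ (ENNReal.le_tsum m)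
  refine (key (m + 1) ?_).trans ?_
  · rw [rad_succ, rad_eq]; linarith
  gcongr
  refine avg_bound _ hf hp η d C (by linarith [hS.2.1]) h x w (m + 1) ?_
    (dset_lower hS hwS _) htr
  rw [dist_comm, ← hw, rad_succ, rad_eq]
  linarith

lemma hardy_int {n : ℕ} {S : Set (Rn n)} {d C : ℝ} (hS : IsDSet S d C)
    {p s η : ℝ} (hp : 1 < p) (hs : 0 < s) (hη0 : 0 < η) (hη : 2 * η = s * p + d - n) :
    ∃ K : ℝ≥0∞, K ≠ ⊤ ∧ ∀ f : Rn n → ℝ, Measurable f → ∫⁻ x, ‖f x‖ₑ ^ p ≠ ⊤ → TraceZero S d f →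
      ∫⁻ x, ENNReal.ofReal (|f x| ^ p / infDist x S ^ (s * p)) ≤
        W (s * p) * (∫⁻ x, ‖f x‖ₑ ^ p) + K * ∫⁻ x, ∫⁻ y,
          ENNReal.ofReal (|f x - f y| ^ p / euclDist x y ^ (s * p + n)) := by
  have hp0 : 0 < p := by linarith
  have ha : 0 < s * p + n := by positivity
  have := dset_locFin hS
  set U : ℝ≥0∞ := ENNReal.ofReal C * W d with hUdef
  set M1 : ℝ≥0∞ := 2 ^ (p - 1) * W (s * p) with hM1
  set M2 : ℝ≥0∞ := 2 ^ (p - 1) * ENNReal.ofReal C * Kg (η / p) ^ p * U * W (3 * n + s * p)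
    with hM2
  set K0 : ℝ≥0∞ := Kg (s * p + n) * ENNReal.ofReal ((4 * n) ^ (s * p + n)) with hK0
  have h2 : (2 : ℝ≥0∞) ^ (p - 1) ≠ ⊤ :=
    ENNReal.rpow_ne_top_of_nonneg (by linarith) (by norm_num)
  have hU : U ≠ ⊤ := ENNReal.mul_ne_top ENNReal.ofReal_ne_top (W_ne_top _)
  have hM1t : M1 ≠ ⊤ := ENNReal.mul_ne_top h2 (W_ne_top _)
  have hM2t : M2 ≠ ⊤ := ENNReal.mul_ne_top (ENNReal.mul_ne_top (ENNReal.mul_ne_top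
    (ENNReal.mul_ne_top h2 ENNReal.ofReal_ne_top)
    (ENNReal.rpow_ne_top_of_nonneg hp0.le (Kg_ne_top (by positivity)))) hU) (W_ne_top _)
  have hK0t : K0 ≠ ⊤ := ENNReal.mul_ne_top (Kg_ne_top ha) ENNReal.ofReal_ne_top
  refine ⟨(M1 + M2 * Kg η) * K0, ENNReal.mul_ne_top (ENNReal.add_ne_top.2 ⟨hM1t,
    ENNReal.mul_ne_top hM2t (Kg_ne_top hη0)⟩) hK0t, fun f hf hL htr => ?_⟩
  set H : ℕ → ℝ≥0∞ := fun k => W ((s * p + n) * k) * Ik p f k with hH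
  have hHs : ∑' k, H k ≤ K0 * ∫⁻ x, ∫⁻ y,
          ENNReal.ofReal (|f x - f y| ^ p / euclDist x y ^ (s * p + n)) := Ik_sum hp ha hf
  have hshift : ∀ j : ℕ, ∑' i : ℕ, H (i + j) ≤ ∑' k, H k := fun j =>
    ENNReal.tsum_comp_le_tsum_of_injective (add_left_injective j) H
  have hfm : Measurable fun x => ‖f x‖ₑ ^ p := by fun_prop
  have hstep : ∀ i : ℕ, W (s * p * ((i + 1 : ℕ) + 1)) *
      ∫⁻ x, Phi ((μH[d] : Measure (Rn n)).restrict S) p η d C f (i + 1) x ≤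
      M1 * H (i + 1) + M2 * ∑' j : ℕ, W (-(η * j)) * H (i + 1 + j) := fun i =>
    Phi_int _ hf (i + 1) U hη (fun k hk y => dset_upper hS y k (by omega))
  have hdouble : ∑' i : ℕ, ∑' j : ℕ, W (-(η * j)) * H (i + 1 + j) ≤ Kg η * ∑' k, H k := by
    rw [ENNReal.tsum_comm]
    unfold Kg
    rw [← ENNReal.tsum_mul_right]
    refine ENNReal.tsum_le_tsum fun j => ?_
    rw [ENNReal.tsum_mul_left]
    refine mul_le_mul_right ?_ _
    simpa only [add_assoc] using hshift (1 + j)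
  calc ∫⁻ x, ENNReal.ofReal (|f x| ^ p / infDist x S ^ (s * p))
      ≤ ∫⁻ x, (W (s * p) * ‖f x‖ₑ ^ p + ∑' i : ℕ, W (s * p * ((i + 1 : ℕ) + 1)) *
        Phi ((μH[d] : Measure (Rn n)).restrict S) p η d C f (i + 1) x) :=
        lintegral_mono fun x => hardy_pointwise hS hf hp hs η hL htr x
    _ = W (s * p) * (∫⁻ x, ‖f x‖ₑ ^ p) + ∑' i : ℕ, W (s * p * ((i + 1 : ℕ) + 1)) *
        ∫⁻ x, Phi ((μH[d] : Measure (Rn n)).restrict S) p η d C f (i + 1) x := by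
      rw [lintegral_add_left (hfm.const_mul _), lintegral_const_mul _ hfm,
        lintegral_tsum (fun i => ((meas_Phi _ p η d C hf _).const_mul _).aemeasurable)]
      simp_rw [lintegral_const_mul _ (meas_Phi _ p η d C hf _)]
    _ ≤ W (s * p) * (∫⁻ x, ‖f x‖ₑ ^ p) + ∑' i : ℕ, (M1 * H (i + 1) +
        M2 * ∑' j : ℕ, W (-(η * j)) * H (i + 1 + j)) := by
      gcongr with i
      exact hstep i
    _ ≤ W (s * p) * (∫⁻ x, ‖f x‖ₑ ^ p) + (M1 + M2 * Kg η) * ∑' k, H k := by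
      rw [ENNReal.tsum_add, ENNReal.tsum_mul_left, ENNReal.tsum_mul_left, add_mul, mul_assoc M2]
      exact add_le_add le_rfl (add_le_add (mul_le_mul_right (hshift 1) _)
        (mul_le_mul_right hdouble _))
    _ ≤ _ := by
      rw [mul_assoc (M1 + M2 * Kg η)]
      gcongr

/-- **Hardy inequality for fractional Sobolev spaces** (Theorem 3.2).
If `S ⊆ ℝⁿ` (`n ≥ 2`) is a `d`-set with `n−1 < d < n`, `1 < p < ∞` and
`(n−d)/p < s < 1`, then there is `c > 0` such that every `f ∈ W^{s,p}(ℝⁿ)` with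
`Tr_S f = 0` ℋᵈ-a.e. satisfies
`(∫ |f(x)|^p / dist(x,S)^{sp} dx)^{1/p} ≤ c ‖f‖_{W^{s,p}(ℝⁿ)}`. -/
theorem hardy_fractional_sobolev {n : ℕ} (hn : 2 ≤ n) (S : Set (Rn n)) (d C₀ : ℝ)
    (hS : IsDSet S d C₀) (hd1 : (n : ℝ) - 1 < d) (hd2 : d < n)
    (p s : ℝ) (hp : 1 < p) (hs1 : ((n : ℝ) - d) / p < s) (hs2 : s < 1) :
    ∃ c > 0, ∀ f : Rn n → ℝ, Measurable f → sobolevNorm s p f < ⊤ →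
      TraceZero S d f →
      hardyLHS S s p f ≤ ENNReal.ofReal c * sobolevNorm s p f := by
  have hp0 : 0 < p := by linarith
  have hs : 0 < s := lt_of_le_of_lt (div_nonneg (by linarith) hp0.le) hs1
  rw [div_lt_iff₀ hp0] at hs1
  obtain ⟨K, hK, hmain⟩ := hardy_int (η := (s * p + d - n) / 2) hS hp hs (by linarith) (by ring)
  set B : ℝ≥0∞ := (W (s * p) + K) ^ (1 / p) with hB
  have hBt : B ≠ ⊤ := ENNReal.rpow_ne_top_of_nonneg (by positivity)
    (ENNReal.add_ne_top.2 ⟨W_ne_top _, hK⟩)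
  refine ⟨B.toReal + 1, by positivity, fun f hf hfin htr => ?_⟩
  have hBc : B ≤ ENNReal.ofReal (B.toReal + 1) := by
    calc B = ENNReal.ofReal B.toReal := (ENNReal.ofReal_toReal hBt).symm
      _ ≤ _ := ENNReal.ofReal_le_ofReal (by linarith)
  set N := sobolevNorm s p f with hN
  have hpow : ∀ a : ℝ≥0∞, (a ^ (1 / p)) ^ p = a := fun a => by
    rw [← ENNReal.rpow_mul, one_div_mul_cancel hp0.ne', ENNReal.rpow_one]
  have hL : ∫⁻ x, ‖f x‖ₑ ^ p ≤ N ^ p := by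
    rw [← hpow (∫⁻ x, ‖f x‖ₑ ^ p)]
    gcongr
    rw [hN]
    unfold sobolevNorm lpNormR
    simp_rw [← Real.enorm_eq_ofReal_abs]
    exact le_self_add
  have hG : ∫⁻ x, ∫⁻ y, ENNReal.ofReal (|f x - f y| ^ p / euclDist x y ^ (s * p + n)) ≤ N ^ p := by
    rw [← hpow (∫⁻ x, ∫⁻ y, ENNReal.ofReal (|f x - f y| ^ p / euclDist x y ^ (s * p + n)))]
    gcongr
    exact le_add_self
  have hLt : ∫⁻ x, ‖f x‖ₑ ^ p ≠ ⊤ :=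
    (hL.trans_lt (ENNReal.rpow_lt_top_of_nonneg hp0.le hfin.ne)).ne
  have h1 := hmain f hf hLt htr
  calc hardyLHS S s p f ≤ ((W (s * p) + K) * N ^ p) ^ (1 / p) := by
        unfold hardyLHS
        gcongr
        refine h1.trans ?_
        rw [add_mul]
        gcongr
    _ = B * N := by
      rw [ENNReal.mul_rpow_of_nonneg _ _ (by positivity), ← ENNReal.rpow_mul,
        mul_one_div_cancel hp0.ne', ENNReal.rpow_one]
    _ ≤ _ := by gcongr
end
end

section
/- Let S ⊆ ℝⁿ (n ≥ 2) be a d-set with n−1 < d < n, let 1 < p < ∞, 1 ≤ q < ∞ and s > (n−d)/p. Then there is a constant c > 0 (depending on n, d, p, q, s and S) such that for every f ∈ F^s_{pq}(ℝⁿ) whose trace satisfies Tr_S f = 0 ℋᵈ-almost everywhere on S, one has (∫_{ℝⁿ} |f(x)|^p / dist(x,S)^{sp} dx)^{1/p} ≤ c ‖f‖_{F^s_{pq}(ℝⁿ)}. -/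
open MeasureTheory Metric Set Filter
open scoped ENNReal NNReal Topology

noncomputable section

/-- The normalized local best approximation `ℰ_k(f, Q(x,r))_{L^u}`: the infimum over
polynomials `P` of degree at most `k-1` of `((1/|Q|) ∫_Q |f − P|^u)^{1/u}`. -/
def localApprox {n : ℕ} (k : ℕ) (u : ℝ) (f : Rn n → ℝ) (x : Rn n) (r : ℝ) : ℝ≥0∞ :=
  ⨅ (P : MvPolynomial (Fin n) ℝ) (_ : P.totalDegree ≤ k - 1),
    ((volume (closedBall x r))⁻¹ *
      ∫⁻ y in closedBall x r, ENNReal.ofReal |f y - MvPolynomial.eval y P| ^ u) ^ (1 / u)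

/-- The Triebel–Lizorkin norm `‖f‖_{F^s_{pq}} = ‖f‖_{L^p} + ‖g‖_{L^p}` with
`g(x) = (∫₀¹ (t^{−s} ℰ_k(f,Q(x,t))_{L¹})^q dt/t)^{1/q}` and `k = [s]+1`. -/
def tlNorm {n : ℕ} (s p q : ℝ) (f : Rn n → ℝ) : ℝ≥0∞ :=
  (∫⁻ x, ENNReal.ofReal |f x| ^ p) ^ (1 / p) +
  (∫⁻ x, ((∫⁻ t in Set.Ioo (0:ℝ) 1,
      (ENNReal.ofReal (t ^ (-s)) * localApprox (⌊s⌋₊ + 1) 1 f x t) ^ q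
        * ENNReal.ofReal t⁻¹) ^ (1 / q)) ^ p) ^ (1 / p)

theorem poly_strict {n : ℕ} (P : MvPolynomial (Fin n) ℝ) (x : Rn n) :
    HasStrictFDerivAt (fun y : Rn n => MvPolynomial.eval y P)
      (∑ i, MvPolynomial.eval x (MvPolynomial.pderiv i P) •
        (ContinuousLinearMap.proj i : Rn n →L[ℝ] ℝ)) x := by
  induction P using MvPolynomial.induction_on with
  | C a => simpa using hasStrictFDerivAt_const a x
  | add p q hp hq =>
    simp only [map_add, add_smul, Finset.sum_add_distrib]
    exact hp.add hq
  | mul_X p i hp =>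
    have h2 : HasStrictFDerivAt (fun y : Rn n => y i)
      (ContinuousLinearMap.proj i : Rn n →L[ℝ] ℝ) x := hasStrictFDerivAt_apply i x
    have h3 := hp.mul h2
    simp only [map_mul, MvPolynomial.eval_X]
    refine h3.congr_fderiv ?_
    refine ContinuousLinearMap.ext fun v => ?_
    have : ∀ j, MvPolynomial.pderiv j (p * MvPolynomial.X i) = p * (if i = j then 1 else 0) + MvPolynomial.X i * MvPolynomial.pderiv j p := by
      intro j
      rw [Derivation.leibniz, MvPolynomial.pderiv_X]
      by_cases h : i = j
      · subst h; simp
      · simp [h]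
    simp only [this, _root_.sum_apply, _root_.add_apply, _root_.smul_apply, ContinuousLinearMap.proj_apply, smul_eq_mul, map_add, map_mul, MvPolynomial.eval_X, add_mul, Finset.sum_add_distrib, Finset.mul_sum, mul_assoc]
    congr 1
    simp [apply_ite]

theorem pderiv_deg {n : ℕ} (P : MvPolynomial (Fin n) ℝ) (i : Fin n) (N : ℕ)
    (h : P.totalDegree ≤ N + 1) : (MvPolynomial.pderiv i P).totalDegree ≤ N := by
  refine Finset.sup_le fun b hb => ?_
  rw [MvPolynomial.mem_support_iff, MvPolynomial.coeff_pderiv] at hb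
  have := (MvPolynomial.le_totalDegree (p := P) (s := b + Finsupp.single i 1)
    (by rw [MvPolynomial.mem_support_iff]; intro h0; simp [h0] at hb)).trans h
  rw [Finsupp.sum_add_index' (fun _ => rfl) (fun _ _ _ => rfl)] at this
  simpa using this

theorem poly_cont {n : ℕ} (P : MvPolynomial (Fin n) ℝ) :
    Continuous (fun y : Rn n => MvPolynomial.eval y P) := MvPolynomial.continuous_eval P

theorem regular_zero_dim {n : ℕ} (P : MvPolynomial (Fin n) ℝ) (i : Fin n) :
    dimH {x : Rn n | MvPolynomial.eval x P = 0 ∧ MvPolynomial.eval x (MvPolynomial.pderiv i P) ≠ 0}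
      ≤ ((n - 1 : ℕ) : ℝ≥0∞) := by
  by_contra hcon
  push Not at hcon
  obtain ⟨x, hx, hx2⟩ := exists_mem_nhdsWithin_lt_dimH_of_lt_dimH hcon
  obtain ⟨hx0, hxi⟩ := hx
  set a := MvPolynomial.eval x (MvPolynomial.pderiv i P) with ha
  have hst := poly_strict P x
  set A : Rn n →L[ℝ] ℝ := ∑ j, MvPolynomial.eval x (MvPolynomial.pderiv j P) •
        (ContinuousLinearMap.proj j : Rn n →L[ℝ] ℝ) with hA
  have hlit := hst.isLittleO.def (c := |a|/2) (by positivity)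
  rw [nhds_prod_eq, Filter.eventually_prod_self_iff'] at hlit
  obtain ⟨t, ht, htp'⟩ := hlit
  have htp : ∀ y ∈ t, ∀ z ∈ t, ‖MvPolynomial.eval y P - MvPolynomial.eval z P - A (y - z)‖ ≤ |a| / 2 * ‖y - z‖ :=
    fun y hy z hz => htp' y hy z hz
  clear htp'
  set M : ℝ := ∑ j, |MvPolynomial.eval x (MvPolynomial.pderiv j P)| with hM
  have hM0 : 0 ≤ M := Finset.sum_nonneg fun _ _ => abs_nonneg _
  clear_value M A a
  let π : Rn n → ({j : Fin n // j ≠ i} → ℝ) := fun y j => y j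
  let K : ℝ := 1 + 2 * M / |a|
  have ha0 : 0 < |a| := abs_pos.mpr hxi
  have hK : 0 ≤ 2 * M / |a| := div_nonneg (by linarith) ha0.le
  obtain ⟨Z, hZ⟩ : ∃ Z, Z = {x : Rn n | MvPolynomial.eval x P = 0 ∧ MvPolynomial.eval x (MvPolynomial.pderiv i P) ≠ 0} := ⟨_, rfl⟩
  rw [← hZ] at hx2
  have hZm : ∀ y ∈ Z, MvPolynomial.eval y P = 0 := by
    intro y hy; rw [hZ] at hy; exact hy.1
  have key : ∀ y ∈ t ∩ Z, ∀ z ∈ t ∩ Z, dist y z ≤ K * dist (π y) (π z) := by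
    intro y hy z hz
    have h1 := htp y hy.1 z hz.1
    have hyz : MvPolynomial.eval y P = 0 := hZm y hy.2
    have hzz : MvPolynomial.eval z P = 0 := hZm z hz.2
    simp only [hyz, hzz, sub_zero, zero_sub, norm_neg] at h1
    set δ := dist (π y) (π z) with hδ
    have hδ0 : 0 ≤ δ := dist_nonneg
    have hj : ∀ j ≠ i, |y j - z j| ≤ δ := by
      intro j hj
      have := dist_le_pi_dist (π y) (π z) ⟨j, hj⟩
      simpa [π, Real.dist_eq] using this
    have hAyz : A (y - z) = a * (y i - z i) + ∑ j ∈ Finset.univ.erase i,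
        MvPolynomial.eval x (MvPolynomial.pderiv j P) * (y j - z j) := by
      rw [hA, _root_.sum_apply, ← Finset.add_sum_erase _ _ (Finset.mem_univ i)]
      simp [ha]
    have hB : |∑ j ∈ Finset.univ.erase i,
        MvPolynomial.eval x (MvPolynomial.pderiv j P) * (y j - z j)| ≤ M * δ := by
      refine (Finset.abs_sum_le_sum_abs _ _).trans ?_
      rw [hM, Finset.sum_mul]
      refine (Finset.sum_le_sum (f := fun j => _) (g := fun j => |MvPolynomial.eval x (MvPolynomial.pderiv j P)| * δ) ?_).trans
        (Finset.sum_le_sum_of_subset_of_nonneg (Finset.erase_subset _ _) ?_)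
      · intro j hjj
        rw [abs_mul]
        exact mul_le_mul_of_nonneg_left (hj j (Finset.ne_of_mem_erase hjj)) (abs_nonneg _)
      · intros; positivity
    have hnorm : ‖y - z‖ ≤ max |y i - z i| δ := by
      rw [pi_norm_le_iff_of_nonneg (by positivity)]
      intro j
      by_cases h : j = i
      · subst h; exact le_max_left _ _
      · exact (hj j h).trans (le_max_right _ _)
    have hcase : |a| * |y i - z i| ≤ |a| / 2 * max |y i - z i| δ + M * δ := by
      rw [hAyz, Real.norm_eq_abs] at h1
      have h2 := abs_sub_abs_le_abs_sub (a * (y i - z i)) (-(∑ j ∈ Finset.univ.erase i,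
        MvPolynomial.eval x (MvPolynomial.pderiv j P) * (y j - z j)))
      rw [sub_neg_eq_add, abs_neg, abs_mul] at h2
      have h3 : |a| / 2 * ‖y - z‖ ≤ |a| / 2 * max |y i - z i| δ := by gcongr
      linarith
    have hyi : |y i - z i| ≤ K * δ := by
      rcases le_total |y i - z i| δ with h | h
      · simp only [K]; nlinarith
      · rw [max_eq_left h] at hcase
        have : |y i - z i| ≤ 2 * M / |a| * δ := by
          rw [div_mul_eq_mul_div, le_div_iff₀ ha0]; nlinarith
        simp only [K]; nlinarith
    rw [dist_eq_norm]
    refine hnorm.trans (max_le hyi ?_)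
    simp only [K]; nlinarith
  have hT : t ∩ Z ∈ 𝓝[Z] x := by
    rw [inter_comm]; exact inter_mem_nhdsWithin _ ht
  have h3 := hx2 _ hT
  have hanti : AntilipschitzWith (Real.toNNReal K) (fun y : ↥(t ∩ Z) => π y) := by
    refine AntilipschitzWith.of_le_mul_dist fun y z => ?_
    rw [Real.coe_toNNReal _ (by positivity)]
    exact key y y.2 z z.2
  have h4 := hanti.le_dimH_image univ
  have h5 : dimH (univ : Set ↥(t ∩ Z)) = dimH (t ∩ Z) := by
    have := (isometry_subtype_coe (s := t ∩ Z)).dimH_image univ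
    rw [← this, Subtype.coe_image_univ]
  have h6 := dimH_mono (subset_univ ((fun y : ↥(t ∩ Z) => π y) '' univ))
  rw [Real.dimH_univ_pi] at h6
  rw [h5] at h4
  have h7 : Fintype.card {j : Fin n // j ≠ i} = n - 1 := by
    simp [Fintype.card_subtype_compl]
  rw [h7] at h6
  exact absurd h3 (not_lt.mpr (h4.trans h6))

theorem zero_dim {n : ℕ} (N : ℕ) : ∀ P : MvPolynomial (Fin n) ℝ, P ≠ 0 → P.totalDegree ≤ N →
    dimH {x : Rn n | MvPolynomial.eval x P = 0} ≤ ((n - 1 : ℕ) : ℝ≥0∞) := by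
  induction N with
  | zero =>
    intro P hP h0
    obtain ⟨c, rfl⟩ : ∃ c, P = MvPolynomial.C c := ⟨_, MvPolynomial.totalDegree_eq_zero_iff_eq_C.mp (Nat.le_zero.mp h0)⟩
    have : c ≠ 0 := by rintro rfl; simp at hP
    simp [this]
  | succ N ih =>
    intro P hP hN
    by_cases h : ∃ i, MvPolynomial.pderiv i P ≠ 0
    · obtain ⟨i, hi⟩ := h
      have h1 := ih _ hi (pderiv_deg P i N hN)
      have h2 := regular_zero_dim P i
      refine (dimH_mono (t := {x : Rn n | MvPolynomial.eval x P = 0 ∧ MvPolynomial.eval x (MvPolynomial.pderiv i P) ≠ 0} ∪ {x : Rn n | MvPolynomial.eval x (MvPolynomial.pderiv i P) = 0}) ?_).trans ?_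
      · intro x hx
        by_cases h : MvPolynomial.eval x (MvPolynomial.pderiv i P) = 0
        · right; exact h
        · left; exact ⟨hx, h⟩
      · rw [dimH_union]; exact max_le h2 h1
    · push Not at h
      have hc : ∀ x y : Rn n, MvPolynomial.eval x P = MvPolynomial.eval y P := by
        intro x y
        refine is_const_of_fderiv_eq_zero (𝕜 := ℝ) (f := fun y : Rn n => MvPolynomial.eval y P) (fun z => (poly_strict P z).hasFDerivAt.differentiableAt) ?_ x y
        intro z
        rw [(poly_strict P z).hasFDerivAt.fderiv]
        simp [h]
      have : P = MvPolynomial.C (MvPolynomial.eval 0 P) := by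
        apply MvPolynomial.funext
        intro x; rw [MvPolynomial.eval_C]; exact hc _ _
      refine ih P hP ?_
      rw [this]; simp

theorem zero_null {n : ℕ} {d : ℝ} (hn : 1 ≤ n) (hd : (n : ℝ) - 1 < d) (P : MvPolynomial (Fin n) ℝ) (hP : P ≠ 0) :
    μH[d] {x : Rn n | MvPolynomial.eval x P = 0} = 0 := by
  have h := zero_dim _ P hP le_rfl
  have hd0 : 0 ≤ d := by
    have : (1 : ℝ) ≤ n := by exact_mod_cast hn
    linarith
  lift d to ℝ≥0 using hd0
  apply hausdorffMeasure_of_dimH_lt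
  refine h.trans_lt ?_
  have : ((n - 1 : ℕ) : ℝ≥0) < d := by
    rw [← NNReal.coe_lt_coe, NNReal.coe_natCast, Nat.cast_sub hn]; simpa using hd
  exact_mod_cast this

open Classical in
theorem zero_cover {n : ℕ} {d : ℝ} (hn : 1 ≤ n) (hd : (n : ℝ) - 1 < d) (hd0 : 0 < d) (P : MvPolynomial (Fin n) ℝ) (hP : P ≠ 0)
    (η : ℝ≥0∞) (hη : η ≠ 0) : ∃ (y : ℕ → Rn n) (ρ : ℕ → ℝ), (∀ i, 0 < ρ i) ∧
      {x : Rn n | MvPolynomial.eval x P = 0} ⊆ ⋃ i, ball (y i) (ρ i) ∧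
      ∑' i, ENNReal.ofReal (ρ i) ^ d ≤ η := by
  have h0 := zero_null hn hd P hP
  have h2d : ((2 : ℝ≥0∞) ^ d) ≠ ⊤ := by simp [hd0.le]
  have h2d0 : ((2 : ℝ≥0∞) ^ d) ≠ 0 := by simp [hd0.not_gt]
  set ζ : ℝ≥0∞ := (2 ^ d)⁻¹ * (η / 2) with hζ
  have hζ0 : ζ ≠ 0 := by
    rw [hζ]; refine mul_ne_zero (ENNReal.inv_ne_zero.mpr h2d) (ENNReal.div_ne_zero.mpr ⟨hη, by simp⟩)
  have hlt : μH[d] {x : Rn n | MvPolynomial.eval x P = 0} < ζ := by rw [h0]; exact pos_iff_ne_zero.mpr hζ0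
  rw [Measure.hausdorffMeasure_apply] at hlt
  have h1 := (le_iSup₂ (f := fun (r : ℝ≥0∞) (_ : 0 < r) =>
        ⨅ (t : ℕ → Set (Rn n)) (_ : {x : Rn n | MvPolynomial.eval x P = 0} ⊆ ⋃ n, t n) (_ : ∀ n, ediam (t n) ≤ r),
          ∑' n, ⨆ _ : (t n).Nonempty, ediam (t n) ^ d) 1 one_pos).trans_lt hlt
  simp only [iInf_lt_iff] at h1
  obtain ⟨t, ht, hdi, hsum⟩ := h1
  obtain ⟨ε, hε, hεs⟩ := ENNReal.exists_pos_sum_of_countable hζ0 ℕ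
  let σ : ℕ → ℝ := fun i => (ε i : ℝ) ^ (1 / d)
  have hσ : ∀ i, 0 < σ i := fun i => Real.rpow_pos_of_pos (hε i) _
  let D : ℕ → ℝ := fun i => (ediam (t i)).toReal
  have hDtop : ∀ i, ediam (t i) ≠ ⊤ := fun i => ((hdi i).trans_lt ENNReal.one_lt_top).ne
  let y : ℕ → Rn n := fun i => if h : (t i).Nonempty then h.some else 0
  refine ⟨y, fun i => D i + σ i, fun i => add_pos_of_nonneg_of_pos ENNReal.toReal_nonneg (hσ i), ?_, ?_⟩
  · refine ht.trans (iUnion_mono fun i x hx => ?_)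
    have hne : (t i).Nonempty := ⟨x, hx⟩
    have hy : y i ∈ t i := by simp only [y, hne, dif_pos]; exact hne.some_mem
    rw [mem_ball]
    have : dist x (y i) ≤ D i := by
      rw [dist_edist]; exact ENNReal.toReal_mono (hDtop i) (edist_le_ediam_of_mem hx hy)
    linarith [hσ i]
  · have hb : ∀ i, ENNReal.ofReal (D i + σ i) ^ d ≤ 2 ^ d * ((⨆ _ : (t i).Nonempty, ediam (t i) ^ d) + ε i) := by
      intro i
      have e1 : ENNReal.ofReal (D i) ^ d ≤ ⨆ _ : (t i).Nonempty, ediam (t i) ^ d := by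
        simp only [D, ENNReal.ofReal_toReal (hDtop i)]
        by_cases h : (t i).Nonempty
        · simp [h]
        · rw [not_nonempty_iff_eq_empty] at h; simp [h, hd0]
      have e2 : ENNReal.ofReal (σ i) ^ d = ε i := by
        simp only [σ]
        rw [ENNReal.ofReal_rpow_of_nonneg (by positivity) hd0.le, ← Real.rpow_mul (by positivity)]
        rw [one_div_mul_cancel hd0.ne', Real.rpow_one, ENNReal.ofReal_coe_nnreal]
      calc ENNReal.ofReal (D i + σ i) ^ d ≤ (2 * max (ENNReal.ofReal (D i)) (ENNReal.ofReal (σ i))) ^ d := by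
            gcongr
            rw [two_mul]
            exact ENNReal.ofReal_add_le.trans (add_le_add (le_max_left _ _) (le_max_right _ _))
        _ = 2 ^ d * (max (ENNReal.ofReal (D i)) (ENNReal.ofReal (σ i))) ^ d := ENNReal.mul_rpow_of_nonneg _ _ hd0.le
        _ ≤ 2 ^ d * (ENNReal.ofReal (D i) ^ d + ENNReal.ofReal (σ i) ^ d) := by
            gcongr
            rcases le_total (ENNReal.ofReal (D i)) (ENNReal.ofReal (σ i)) with h | h
            · rw [max_eq_right h]; exact le_add_self
            · rw [max_eq_left h]; exact le_self_add
        _ ≤ _ := by rw [e2]; gcongr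
    refine (ENNReal.tsum_le_tsum hb).trans ?_
    rw [ENNReal.tsum_mul_left, ENNReal.tsum_add]
    calc _ ≤ 2 ^ d * (ζ + ζ) := by gcongr
      _ = 2 ^ d * ((2 ^ d)⁻¹ * (η / 2 + η / 2)) := by rw [hζ]; ring
      _ = η := by rw [← mul_assoc, ENNReal.mul_inv_cancel h2d0 h2d, one_mul, ENNReal.add_halves]

def Reg {n : ℕ} (μ : Measure (Rn n)) (S : Set (Rn n)) (d a b : ℝ) : Prop :=
  μ Sᶜ = 0 ∧ 0 < a ∧ 0 < b ∧ ∀ w ∈ S, ∀ r : ℝ, 0 < r → r ≤ 1 →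
    ENNReal.ofReal (a * r ^ d) ≤ μ (closedBall w r) ∧ μ (closedBall w r) ≤ ENNReal.ofReal (b * r ^ d)

theorem Reg.upper {n : ℕ} {μ : Measure (Rn n)} {S : Set (Rn n)} {d a b : ℝ} (h : Reg μ S d a b)
    (x : Rn n) (r : ℝ) (hr : 0 < r) (hr1 : r ≤ 1 / 2) :
    μ (closedBall x r) ≤ ENNReal.ofReal (b * (2 * r) ^ d) := by
  obtain ⟨h0, -, -, h3⟩ := h
  by_cases hne : (closedBall x r ∩ S).Nonempty
  · obtain ⟨w, hw, hwS⟩ := hne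
    refine (measure_mono ?_).trans (h3 w hwS (2 * r) (by linarith) (by linarith)).2
    intro y hy
    rw [mem_closedBall] at *
    linarith [dist_triangle_right y w x]
  · have : closedBall x r ⊆ Sᶜ := by
      intro y hy hyS; exact hne ⟨y, hy, hyS⟩
    rw [measure_mono_null this h0]; exact zero_le

abbrev Idx (n m : ℕ) : Finset (Fin n →₀ ℕ) := Finset.Iic (Finsupp.equivFunOnFinite.symm fun _ => m)

def mkP {n m : ℕ} (c : Idx n m → ℝ) : MvPolynomial (Fin n) ℝ :=
  ∑ a : Idx n m, MvPolynomial.monomial a.1 (c a)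

theorem mkP_coeff {n m : ℕ} (c : Idx n m → ℝ) (a : Idx n m) : (mkP c).coeff a.1 = c a := by
  classical
  simp only [mkP, MvPolynomial.coeff_sum, MvPolynomial.coeff_monomial]
  rw [Finset.sum_eq_single a]
  · simp
  · intro b _ hb
    rw [if_neg]; intro h; exact hb (Subtype.ext h)
  · simp

theorem mkP_ne {n m : ℕ} (c : Idx n m → ℝ) (hc : c ≠ 0) : mkP c ≠ 0 := by
  intro h
  apply hc; ext a
  rw [← mkP_coeff c a, h]; simp

theorem eval_mkP {n m : ℕ} (c : Idx n m → ℝ) (x : Rn n) :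
    MvPolynomial.eval x (mkP c) = ∑ a : Idx n m, c a * ∏ i, x i ^ (a.1 i) := by
  simp only [mkP, map_sum, MvPolynomial.eval_monomial]
  refine Finset.sum_congr rfl fun a _ => ?_
  rw [Finsupp.prod_fintype]; simp

theorem eval_mkP_le {n m : ℕ} (c : Idx n m → ℝ) (x : Rn n) (hx : x ∈ closedBall (0 : Rn n) 1) :
    |MvPolynomial.eval x (mkP c)| ≤ (Idx n m).card * ‖c‖ := by
  rw [eval_mkP]
  refine (Finset.abs_sum_le_sum_abs _ _).trans ?_
  refine (Finset.sum_le_card_nsmul _ _ ‖c‖ ?_).trans (by simp)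
  intro a _
  rw [abs_mul, Finset.abs_prod]
  have h1 : ∏ i, |x i ^ (a.1 i)| ≤ 1 := by
    refine Finset.prod_le_one (fun _ _ => abs_nonneg _) fun i _ => ?_
    rw [abs_pow]
    refine pow_le_one₀ (abs_nonneg _) ?_
    rw [mem_closedBall_zero_iff] at hx
    exact (norm_le_pi_norm x i).trans hx
  have h2 : |c a| ≤ ‖c‖ := norm_le_pi_norm c a
  have h3 : 0 ≤ ∏ i, |x i ^ (a.1 i)| := Finset.prod_nonneg fun _ _ => abs_nonneg _
  nlinarith [abs_nonneg (c a)]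

theorem eval_mkP_cont {n m : ℕ} :
    Continuous (fun z : (Idx n m → ℝ) × Rn n => MvPolynomial.eval z.2 (mkP z.1)) := by
  simp only [eval_mkP]
  fun_prop

theorem exists_mkP {n m : ℕ} (P : MvPolynomial (Fin n) ℝ) (h : P.totalDegree ≤ m) :
    ∃ c : Idx n m → ℝ, mkP c = P := by
  classical
  refine ⟨fun a => P.coeff a.1, ?_⟩
  ext b
  by_cases hb : b ∈ Idx n m
  · exact mkP_coeff _ ⟨b, hb⟩
  · have h1 : P.coeff b = 0 := by
      by_contra h0
      apply hb
      rw [Finset.mem_Iic]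
      intro i
      have := (MvPolynomial.le_totalDegree (MvPolynomial.mem_support_iff.mpr h0)).trans h
      simp only [Finsupp.equivFunOnFinite_symm_apply_apply]
      refine le_trans ?_ this
      rw [Finsupp.sum_fintype _ _ (fun _ => rfl)]
      exact Finset.single_le_sum (f := fun i => b i) (fun _ _ => Nat.zero_le _) (Finset.mem_univ i)
    rw [h1]
    simp only [mkP, MvPolynomial.coeff_sum, MvPolynomial.coeff_monomial]
    refine Finset.sum_eq_zero fun a _ => ?_
    rw [if_neg]; rintro rfl; exact hb a.2

theorem scale_poly {n m : ℕ} (P : MvPolynomial (Fin n) ℝ) (h : P.totalDegree ≤ m) (w : Rn n) (r : ℝ) :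
    ∃ Q : MvPolynomial (Fin n) ℝ, Q.totalDegree ≤ m ∧ ∀ y, MvPolynomial.eval y Q = MvPolynomial.eval (w + r • y) P := by
  refine ⟨∑ a ∈ P.support, MvPolynomial.C (P.coeff a) * ∏ i, (MvPolynomial.C (w i) + MvPolynomial.C r * MvPolynomial.X i) ^ (a i), ?_, ?_⟩
  · refine MvPolynomial.totalDegree_finsetSum_le fun a ha => ?_
    refine (MvPolynomial.totalDegree_mul _ _).trans ?_
    rw [MvPolynomial.totalDegree_C, zero_add]
    refine (MvPolynomial.totalDegree_finset_prod _ _).trans ?_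
    refine le_trans ?_ ((MvPolynomial.le_totalDegree ha).trans h)
    rw [Finsupp.sum_fintype _ _ (fun _ => rfl)]
    refine Finset.sum_le_sum fun i _ => ?_
    refine (MvPolynomial.totalDegree_pow _ _).trans ?_
    conv_rhs => rw [← mul_one (a i)]
    refine Nat.mul_le_mul_left _ ?_
    refine (MvPolynomial.totalDegree_add _ _).trans (max_le (by simp) ?_)
    refine (MvPolynomial.totalDegree_mul _ _).trans ?_
    simp
  · intro y
    conv_rhs => rw [MvPolynomial.eval_eq']
    simp [map_sum]

/-- local uniform version -/
theorem markov_local {n m : ℕ} (hn : 1 ≤ n) {μ : Measure (Rn n)} {S : Set (Rn n)} {d a b : ℝ}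
    (hd : (n : ℝ) - 1 < d) (hd0 : 0 < d) (hR : Reg μ S d a b) (c : Idx n m → ℝ) (hc : c ≠ 0) :
    ∃ U ∈ 𝓝 c, ∃ ε > 0, ∀ c' ∈ U, ∀ w ∈ S, ∀ r : ℝ, 0 < r → r ≤ 1 →
      μ {x | x ∈ closedBall w r ∧ |MvPolynomial.eval (r⁻¹ • (x - w)) (mkP c')| ≤ ε} ≤
        ENNReal.ofReal (a / 2 * r ^ d) := by
  obtain ⟨hRS, ha, hb, hR3⟩ := id hR
  set η : ℝ := min ((1 / 4) ^ d) (a / (2 * (b * 2 ^ d))) with hη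
  have hη0 : 0 < η := by rw [hη]; positivity
  obtain ⟨y, ρ, hρ, hcov, hsum⟩ := zero_cover hn hd hd0 (mkP c) (mkP_ne c hc) (ENNReal.ofReal η) (by simpa using hη0)
  have hρ1 : ∀ i, ρ i ≤ 1 / 4 := by
    intro i
    have h1 : ENNReal.ofReal (ρ i) ^ d ≤ ENNReal.ofReal η := (ENNReal.le_tsum i).trans hsum
    rw [ENNReal.ofReal_rpow_of_pos (hρ i), ENNReal.ofReal_le_ofReal_iff hη0.le] at h1
    exact (Real.rpow_le_rpow_iff (hρ i).le (by norm_num) hd0).mp (h1.trans (min_le_left _ _))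
  let O : Set (Rn n) := ⋃ i, ball (y i) (ρ i)
  have hO : IsOpen O := isOpen_iUnion fun i => isOpen_ball
  have hK : IsCompact (closedBall (0 : Rn n) 1 \ O) := (isCompact_closedBall _ _).diff hO
  have hcont : Continuous (fun x : Rn n => |MvPolynomial.eval x (mkP c)|) := (poly_cont _).abs
  obtain ⟨ε, hε, hεK⟩ : ∃ ε > 0, ∀ x ∈ closedBall (0 : Rn n) 1 \ O, ε < |MvPolynomial.eval x (mkP c)| := by
    rcases (closedBall (0 : Rn n) 1 \ O).eq_empty_or_nonempty with h | h
    · exact ⟨1, one_pos, by rw [h]; simp⟩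
    · obtain ⟨x, hx, hmin⟩ := hK.exists_isMinOn h hcont.continuousOn
      have : 0 < |MvPolynomial.eval x (mkP c)| := by
        rw [abs_pos]; intro h0; exact hx.2 (hcov h0)
      refine ⟨_, half_pos this, fun z hz => ?_⟩
      exact (half_lt_self this).trans_le (hmin hz)
  have hop : IsOpen {z : (Idx n m → ℝ) × Rn n | ε < |MvPolynomial.eval z.2 (mkP z.1)|} :=
    isOpen_lt continuous_const eval_mkP_cont.abs
  obtain ⟨U, V, hU, hV, hcU, hKV, hUV⟩ := generalized_tube_lemma (isCompact_singleton (x := c)) hK hop (by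
    rintro ⟨c', x⟩ ⟨h1, h2⟩
    rw [mem_singleton_iff] at h1
    simp only at h1; subst h1
    exact hεK x h2)
  refine ⟨U, hU.mem_nhds (hcU rfl), ε, hε, ?_⟩
  intro c' hc' w hw r hr hr1
  have hsub : {x | x ∈ closedBall w r ∧ |MvPolynomial.eval (r⁻¹ • (x - w)) (mkP c')| ≤ ε} ⊆
      ⋃ i, closedBall (w + r • y i) (r * ρ i) := by
    rintro x ⟨hx, hxe⟩
    have hx1 : r⁻¹ • (x - w) ∈ closedBall (0 : Rn n) 1 := by
      rw [mem_closedBall_zero_iff, norm_smul, Real.norm_of_nonneg (by positivity), ← dist_eq_norm]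
      rw [mem_closedBall] at hx
      rw [inv_mul_le_iff₀ hr]; linarith
    have hxO : r⁻¹ • (x - w) ∈ O := by
      by_contra hno
      have : (c', r⁻¹ • (x - w)) ∈ U ×ˢ V := ⟨hc', hKV ⟨hx1, hno⟩⟩
      have h9 : ε < |MvPolynomial.eval (r⁻¹ • (x - w)) (mkP c')| := by simpa only [mem_setOf_eq] using hUV this
      exact absurd hxe (not_le.mpr h9)
    obtain ⟨i, hi⟩ := mem_iUnion.mp hxO
    refine mem_iUnion.mpr ⟨i, ?_⟩
    rw [mem_closedBall]
    have e : x = w + r • (r⁻¹ • (x - w)) := by rw [smul_inv_smul₀ hr.ne']; abel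
    rw [e, dist_add_left, dist_smul₀, Real.norm_of_nonneg hr.le]
    exact mul_le_mul_of_nonneg_left hi.le hr.le
  refine (measure_mono hsub).trans ((measure_iUnion_le _).trans ?_)
  have hbd : ∀ i, μ (closedBall (w + r • y i) (r * ρ i)) ≤ ENNReal.ofReal (b * 2 ^ d * r ^ d) * ENNReal.ofReal (ρ i) ^ d := by
    intro i
    have h1 : r * ρ i ≤ 1 / 2 := by nlinarith [hρ i, hρ1 i]
    refine (hR.upper _ _ (mul_pos hr (hρ i)) h1).trans (le_of_eq ?_)
    rw [ENNReal.ofReal_rpow_of_pos (hρ i), ← ENNReal.ofReal_mul (by positivity)]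
    congr 1
    rw [Real.mul_rpow (by norm_num) (mul_pos hr (hρ i)).le, Real.mul_rpow hr.le (hρ i).le]; ring
  refine (ENNReal.tsum_le_tsum hbd).trans ?_
  rw [ENNReal.tsum_mul_left]
  refine (mul_le_mul_right hsum _).trans ?_
  rw [← ENNReal.ofReal_mul (by positivity)]
  refine ENNReal.ofReal_le_ofReal ?_
  have : η ≤ a / (2 * (b * 2 ^ d)) := min_le_right _ _
  rw [le_div_iff₀ (by positivity)] at this
  have h2 : 0 < r ^ d := by positivity
  nlinarith

theorem markov_unif {n m : ℕ} (hn : 1 ≤ n) {μ : Measure (Rn n)} {S : Set (Rn n)} {d a b : ℝ}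
    (hd : (n : ℝ) - 1 < d) (hd0 : 0 < d) (hR : Reg μ S d a b) :
    ∃ ε > 0, ∀ c' ∈ sphere (0 : Idx n m → ℝ) 1, ∀ w ∈ S, ∀ r : ℝ, 0 < r → r ≤ 1 →
      μ {x | x ∈ closedBall w r ∧ |MvPolynomial.eval (r⁻¹ • (x - w)) (mkP c')| ≤ ε} ≤
        ENNReal.ofReal (a / 2 * r ^ d) := by
  refine (isCompact_sphere (0 : Idx n m → ℝ) 1).induction_on (p := fun T => ∃ ε > 0, ∀ c' ∈ T, ∀ w ∈ S, ∀ r : ℝ, 0 < r → r ≤ 1 →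
      μ {x | x ∈ closedBall w r ∧ |MvPolynomial.eval (r⁻¹ • (x - w)) (mkP c')| ≤ ε} ≤
        ENNReal.ofReal (a / 2 * r ^ d)) ⟨1, one_pos, by simp⟩ ?_ ?_ ?_
  · rintro T T' hTT ⟨ε, hε, h⟩
    exact ⟨ε, hε, fun c' hc' => h c' (hTT hc')⟩
  · rintro T T' ⟨ε, hε, h⟩ ⟨ε', hε', h'⟩
    refine ⟨min ε ε', lt_min hε hε', ?_⟩
    rintro c' (hc | hc) w hw r hr hr1
    · refine (measure_mono ?_).trans (h c' hc w hw r hr hr1)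
      exact fun x hx => ⟨hx.1, hx.2.trans (min_le_left _ _)⟩
    · refine (measure_mono ?_).trans (h' c' hc w hw r hr hr1)
      exact fun x hx => ⟨hx.1, hx.2.trans (min_le_right _ _)⟩
  · intro c hc
    have hc0 : c ≠ 0 := by rintro rfl; simp at hc
    obtain ⟨U, hU, ε, hε, h⟩ := markov_local hn hd hd0 hR c hc0
    exact ⟨U, mem_nhdsWithin_of_mem_nhds hU, ε, hε, h⟩

theorem markov {n : ℕ} (m : ℕ) (hn : 1 ≤ n) {μ : Measure (Rn n)} {S : Set (Rn n)} {d a b : ℝ}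
    (hd : (n : ℝ) - 1 < d) (hd0 : 0 < d) (hR : Reg μ S d a b) :
    ∃ C : ℝ, 0 < C ∧ ∀ P : MvPolynomial (Fin n) ℝ, P.totalDegree ≤ m → ∀ w ∈ S, ∀ r : ℝ, 0 < r → r ≤ 1 →
      ∀ x ∈ closedBall w r, ENNReal.ofReal |MvPolynomial.eval x P| ≤
        ENNReal.ofReal (C * r ^ (-d)) * ∫⁻ y in closedBall w r, ENNReal.ofReal |MvPolynomial.eval y P| ∂μ := by
  obtain ⟨hRS, ha, hb, hR3⟩ := id hR
  obtain ⟨ε, hε, hM⟩ := markov_unif (m := m) hn hd hd0 hR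
  obtain ⟨N, hN⟩ : ∃ N : ℝ, N = ((Idx n m).card : ℝ) := ⟨_, rfl⟩
  have hN0 : 0 < N := by
    rw [hN]; exact_mod_cast Finset.card_pos.mpr ⟨0, by simp⟩
  refine ⟨N * 2 / (ε * a), by positivity, ?_⟩
  intro P hP w hw r hr hr1 x hx
  obtain ⟨Q, hQ, hQP⟩ := scale_poly P hP w r
  obtain ⟨c, rfl⟩ := exists_mkP Q hQ
  have hPQ : ∀ z, MvPolynomial.eval z P = MvPolynomial.eval (r⁻¹ • (z - w)) (mkP c) := by
    intro z; rw [hQP, smul_inv_smul₀ hr.ne']; congr 2; abel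
  have hx1 : r⁻¹ • (x - w) ∈ closedBall (0 : Rn n) 1 := by
      rw [mem_closedBall_zero_iff, norm_smul, Real.norm_of_nonneg (by positivity), ← dist_eq_norm]
      rw [mem_closedBall] at hx
      rw [inv_mul_le_iff₀ hr]; linarith
  have hup := eval_mkP_le c _ hx1
  rw [← hPQ x, ← hN] at hup
  by_cases hc : c = 0
  · subst hc
    have : |MvPolynomial.eval x P| = 0 := by
      apply le_antisymm _ (abs_nonneg _); simpa using hup
    rw [this]; simp
  have hcn : 0 < ‖c‖ := norm_pos_iff.mpr hc
  have hsph : ‖c‖⁻¹ • c ∈ sphere (0 : Idx n m → ℝ) 1 := by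
    rw [mem_sphere_zero_iff_norm, norm_smul, norm_inv, norm_norm, inv_mul_cancel₀ hcn.ne']
  have h1 := hM _ hsph w hw r hr hr1
  have hev : ∀ z, MvPolynomial.eval z (mkP (‖c‖⁻¹ • c)) = ‖c‖⁻¹ * MvPolynomial.eval z (mkP c) := by
    intro z; simp only [eval_mkP, Finset.mul_sum, Pi.smul_apply, smul_eq_mul, mul_assoc]
  set B := {x | x ∈ closedBall w r ∧ |MvPolynomial.eval (r⁻¹ • (x - w)) (mkP (‖c‖⁻¹ • c))| ≤ ε} with hB
  have hrd : 0 < r ^ d := by positivity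
  have hlow : ENNReal.ofReal (a / 2 * r ^ d) ≤ μ (closedBall w r \ B) := by
    have h2 := (hR3 w hw r hr hr1).1
    have h3 : μ (closedBall w r) ≤ μ (closedBall w r \ B) + μ B := by
      refine (measure_mono ?_).trans (measure_union_le _ _)
      intro z hz; by_cases h : z ∈ B
      · right; exact h
      · left; exact ⟨hz, h⟩
    have h4 : ENNReal.ofReal (a / 2 * r ^ d) + ENNReal.ofReal (a / 2 * r ^ d) ≤ μ (closedBall w r \ B) + ENNReal.ofReal (a / 2 * r ^ d) := by
      rw [← ENNReal.ofReal_add (by positivity) (by positivity)]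
      refine le_trans (le_of_eq ?_) (h2.trans (h3.trans (by gcongr)))
      congr 1; ring
    exact (ENNReal.add_le_add_iff_right ENNReal.ofReal_ne_top).mp h4
  have hBm : MeasurableSet (closedBall w r \ B) := by
    have hcl : IsClosed {x : Rn n | |MvPolynomial.eval (r⁻¹ • (x - w)) (mkP (‖c‖⁻¹ • c))| ≤ ε} :=
      isClosed_le ((poly_cont (mkP (‖c‖⁻¹ • c))).comp (by fun_prop : Continuous fun x : Rn n => r⁻¹ • (x - w))).abs continuous_const
    exact isClosed_closedBall.measurableSet.diff (isClosed_closedBall.inter hcl).measurableSet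
  have hint : ENNReal.ofReal (ε * ‖c‖) * ENNReal.ofReal (a / 2 * r ^ d) ≤ ∫⁻ y in closedBall w r, ENNReal.ofReal |MvPolynomial.eval y P| ∂μ := by
    calc _ ≤ ENNReal.ofReal (ε * ‖c‖) * μ (closedBall w r \ B) := by gcongr
      _ = ∫⁻ y in closedBall w r \ B, ENNReal.ofReal (ε * ‖c‖) ∂μ := by rw [setLIntegral_const]
      _ ≤ ∫⁻ y in closedBall w r \ B, ENNReal.ofReal |MvPolynomial.eval y P| ∂μ := by
        refine setLIntegral_mono' hBm fun y hy => ENNReal.ofReal_le_ofReal ?_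
        have h5 : ε < |MvPolynomial.eval (r⁻¹ • (y - w)) (mkP (‖c‖⁻¹ • c))| := by
          by_contra h; exact hy.2 ⟨hy.1, not_lt.mp h⟩
        rw [hev, abs_mul, abs_of_pos (inv_pos.mpr hcn), lt_inv_mul_iff₀ hcn] at h5
        rw [hPQ]; linarith
      _ ≤ _ := lintegral_mono_set diff_subset
  refine le_trans ?_ (mul_le_mul_right hint _)
  rw [← ENNReal.ofReal_mul (by positivity), ← ENNReal.ofReal_mul (by positivity)]
  refine ENNReal.ofReal_le_ofReal (hup.trans (le_of_eq ?_))
  rw [Real.rpow_neg hr.le]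
  field_simp

theorem vol_cb {n : ℕ} (x : Rn n) {r : ℝ} (hr : 0 ≤ r) :
    volume (closedBall x r) = ENNReal.ofReal ((2 * r) ^ n) := by
  rw [Real.volume_pi_closedBall x hr]; simp

theorem vol_cb_ne_zero {n : ℕ} (x : Rn n) {r : ℝ} (hr : 0 < r) : volume (closedBall x r) ≠ 0 := by
  rw [vol_cb x hr.le]; simp only [ne_eq, ENNReal.ofReal_eq_zero, not_le]; positivity

theorem vol_cb_ne_top {n : ℕ} (x : Rn n) (r : ℝ) : volume (closedBall x r) ≠ ⊤ :=
  measure_closedBall_lt_top.ne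

def avg {n : ℕ} (g : Rn n → ℝ≥0∞) (x : Rn n) (r : ℝ) : ℝ≥0∞ :=
  (volume (closedBall x r))⁻¹ * ∫⁻ y in closedBall x r, g y

def avA {n : ℕ} (f : Rn n → ℝ) (P : MvPolynomial (Fin n) ℝ) (x : Rn n) (r : ℝ) : ℝ≥0∞ :=
  avg (fun y => ENNReal.ofReal |f y - MvPolynomial.eval y P|) x r

theorem localApprox_eq {n : ℕ} (k : ℕ) (f : Rn n → ℝ) (x : Rn n) (r : ℝ) :
    localApprox k 1 f x r = ⨅ (P : MvPolynomial (Fin n) ℝ) (_ : P.totalDegree ≤ k - 1), avA f P x r := by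
  simp [localApprox, avA, avg]

theorem avg_mono {n : ℕ} (g : Rn n → ℝ≥0∞) {x y : Rn n} {r ρ : ℝ} (hr : 0 < r) (hρ : 0 < ρ) (h8 : ρ ≤ 8 * r)
    (hsub : closedBall x r ⊆ closedBall y ρ) : avg g x r ≤ 8 ^ n * avg g y ρ := by
  unfold avg
  rw [← mul_assoc]
  refine mul_le_mul' ?_ (lintegral_mono_set hsub)
  rw [vol_cb x hr.le, vol_cb y hρ.le, ← ENNReal.ofReal_inv_of_pos (by positivity), ← ENNReal.ofReal_inv_of_pos (by positivity)]
  have : (8 : ℝ≥0∞) ^ n = ENNReal.ofReal (8 ^ n) := by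
    rw [ENNReal.ofReal_pow (by norm_num)]; simp
  rw [this, ← ENNReal.ofReal_mul (by positivity)]
  refine ENNReal.ofReal_le_ofReal ?_
  rw [← div_eq_mul_inv, inv_eq_one_div, div_le_div_iff₀ (by positivity) (by positivity), one_mul, ← mul_pow]
  exact pow_le_pow_left₀ (by positivity) (by linarith) _

theorem avg_le_of {n : ℕ} {g : Rn n → ℝ≥0∞} {x : Rn n} {r : ℝ} {c : ℝ≥0∞} (hr : 0 < r)
    (h : ∀ y ∈ closedBall x r, g y ≤ c) : avg g x r ≤ c := by
  unfold avg
  calc _ ≤ (volume (closedBall x r))⁻¹ * ∫⁻ y in closedBall x r, c := by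
        refine mul_le_mul' le_rfl ?_
        exact setLIntegral_mono' isClosed_closedBall.measurableSet h
    _ = c := by
      rw [setLIntegral_const, mul_comm c, ← mul_assoc, ENNReal.inv_mul_cancel (vol_cb_ne_zero x hr) (vol_cb_ne_top x r), one_mul]

theorem avg_add_le {n : ℕ} {g g1 g2 : Rn n → ℝ≥0∞} {x : Rn n} {r : ℝ} (hm : Measurable g1)
    (h : ∀ y ∈ closedBall x r, g y ≤ g1 y + g2 y) : avg g x r ≤ avg g1 x r + avg g2 x r := by
  unfold avg
  rw [← mul_add, ← lintegral_add_left hm]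
  refine mul_le_mul' le_rfl ?_
  exact setLIntegral_mono' isClosed_closedBall.measurableSet h

theorem vol_reg {n : ℕ} : Reg (volume : Measure (Rn n)) univ (n : ℝ) (2 ^ n) (2 ^ n) := by
  refine ⟨by simp, by positivity, by positivity, ?_⟩
  intro w _ r hr _
  rw [vol_cb w hr.le, Real.rpow_natCast, mul_pow]
  exact ⟨le_rfl, le_rfl⟩

theorem leb_markov {n : ℕ} (m : ℕ) (hn : 1 ≤ n) : ∃ C : ℝ≥0∞, C ≠ ⊤ ∧ ∀ P : MvPolynomial (Fin n) ℝ, P.totalDegree ≤ m →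
    ∀ (w : Rn n) (r : ℝ), 0 < r → r ≤ 1 → ∀ x ∈ closedBall w r, ENNReal.ofReal |MvPolynomial.eval x P| ≤
      C * avg (fun y => ENNReal.ofReal |MvPolynomial.eval y P|) w r := by
  obtain ⟨C, hC, h⟩ := markov m hn (by linarith : (n : ℝ) - 1 < n) (by exact_mod_cast hn) (vol_reg (n := n))
  refine ⟨ENNReal.ofReal (C * 2 ^ n), ENNReal.ofReal_ne_top, ?_⟩
  intro P hP w r hr hr1 x hx
  refine (h P hP w (mem_univ _) r hr hr1 x hx).trans (le_of_eq ?_)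
  unfold avg
  rw [← mul_assoc, vol_cb w hr.le, ← ENNReal.ofReal_inv_of_pos (by positivity), ← ENNReal.ofReal_mul (by positivity)]
  congr 2
  rw [Real.rpow_neg hr.le, Real.rpow_natCast]
  field_simp
  ring

theorem comp_poly {n : ℕ} (m : ℕ) (hn : 1 ≤ n) : ∃ C : ℝ≥0∞, C ≠ ⊤ ∧ ∀ f : Rn n → ℝ, Measurable f →
    ∀ P P' : MvPolynomial (Fin n) ℝ, P.totalDegree ≤ m → P'.totalDegree ≤ m →
    ∀ (w y y' : Rn n) (r ρ ρ' : ℝ), 0 < r → r ≤ 1 → 0 < ρ → 0 < ρ' → ρ ≤ 8 * r → ρ' ≤ 8 * r →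
      closedBall w r ⊆ closedBall y ρ → closedBall w r ⊆ closedBall y' ρ' →
      ∀ x ∈ closedBall w r, ENNReal.ofReal |MvPolynomial.eval x P - MvPolynomial.eval x P'| ≤
      C * (avA f P y ρ + avA f P' y' ρ') := by
  obtain ⟨C, hC, h⟩ := leb_markov m hn
  refine ⟨C * 8 ^ n, ENNReal.mul_ne_top hC (by finiteness), ?_⟩
  intro f hf P P' hP hP' w y y' r ρ ρ' hr hr1 hρ hρ' h8 h8' hs hs' x hx
  have h1 := h (P - P') ((MvPolynomial.totalDegree_sub _ _).trans (max_le hP hP')) w r hr hr1 x hx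
  simp only [map_sub] at h1
  refine h1.trans ?_
  rw [mul_assoc]
  gcongr
  rw [mul_add]
  refine (avg_add_le (g1 := fun y => ENNReal.ofReal |f y - MvPolynomial.eval y P|) (g2 := fun y => ENNReal.ofReal |f y - MvPolynomial.eval y P'|) ?_ ?_).trans
    (add_le_add (avg_mono _ hr hρ h8 hs) (avg_mono _ hr hρ' h8' hs'))
  · exact ENNReal.measurable_ofReal.comp ((hf.sub (poly_cont P).measurable).abs)
  · intro z _
    rw [← ENNReal.ofReal_add (abs_nonneg _) (abs_nonneg _)]
    refine ENNReal.ofReal_le_ofReal ?_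
    rw [abs_sub_comm (f z)]
    exact (abs_sub_le _ (f z) _)

def hh (j : ℕ) : ℝ := (1 / 2) ^ (j + 4)

theorem hh_pos (j : ℕ) : 0 < hh j := by unfold hh; positivity
theorem hh_succ (j : ℕ) : hh j = 2 * hh (j + 1) := by unfold hh; rw [show j + 1 + 4 = (j + 4) + 1 by ring, pow_succ]; ring
theorem hh_anti {i j : ℕ} (h : i ≤ j) : hh j ≤ hh i :=
  pow_le_pow_of_le_one (by norm_num) (by norm_num) (by omega)
theorem hh_add (i j : ℕ) : hh (j + i) = (1 / 2) ^ i * hh j := by unfold hh; rw [← pow_add]; congr 1; ring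
theorem hh_le (j : ℕ) : hh j ≤ 1 / 16 := (hh_anti (Nat.zero_le j)).trans (by norm_num [hh])
theorem hh_tendsto (j : ℕ) : Tendsto (fun i => hh (j + i)) atTop (𝓝[>] 0) := by
  rw [tendsto_nhdsWithin_iff]
  refine ⟨?_, Eventually.of_forall fun i => hh_pos _⟩
  simp only [hh_add]
  simpa using (tendsto_pow_atTop_nhds_zero_of_lt_one (by norm_num : (0:ℝ) ≤ 1 / 2) (by norm_num)).mul_const (hh j)

def cen {n : ℕ} (j : ℕ) (x : Rn n) : Rn n := fun i => (⌊x i / hh j⌋ : ℝ) * hh j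

theorem dist_cen {n : ℕ} (j : ℕ) (x : Rn n) : dist x (cen j x) ≤ hh j := by
  rw [dist_pi_le_iff (hh_pos j).le]
  intro i
  have h1 := Int.floor_le (x i / hh j)
  have h2 := Int.lt_floor_add_one (x i / hh j)
  rw [le_div_iff₀ (hh_pos j)] at h1
  rw [div_lt_iff₀ (hh_pos j)] at h2
  rw [Real.dist_eq, abs_le]
  simp only [cen]
  constructor <;> nlinarith [hh_pos j]

def EE {n : ℕ} (k : ℕ) (f : Rn n → ℝ) (j : ℕ) (x : Rn n) : ℝ≥0∞ := localApprox k 1 f (cen j x) (4 * hh j)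

theorem measurable_of_cen {n : ℕ} {α : Type*} [MeasurableSpace α] (φ : Rn n → α) (j : ℕ) : Measurable (fun x => φ (cen j x)) := by
  have h1 : Measurable (fun x : Rn n => fun i => ⌊x i / hh j⌋) := by
    refine measurable_pi_iff.mpr fun i => Int.measurable_floor.comp (by fun_prop)
  have h2 : Measurable (fun z : Fin n → ℤ => φ (fun i => (z i : ℝ) * hh j)) := measurable_of_countable _
  exact h2.comp h1

theorem EE_meas {n : ℕ} (k : ℕ) (f : Rn n → ℝ) (j : ℕ) : Measurable (EE k f j) :=
  measurable_of_cen (fun z => localApprox k 1 f z (4 * hh j)) j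

theorem EE_congr {n : ℕ} (k : ℕ) (f : Rn n → ℝ) (j : ℕ) {x y : Rn n} (h : cen j x = cen j y) : EE k f j x = EE k f j y := by
  unfold EE; rw [h]

/-- telescoping -/
theorem telescope {n : ℕ} (m : ℕ) (hn : 1 ≤ n) : ∃ C : ℝ≥0∞, C ≠ ⊤ ∧ ∀ f : Rn n → ℝ, Measurable f → LocallyIntegrable f →
    ∀ (w : Rn n) (j : ℕ) (e : ℕ → ℝ≥0∞) (P : ℕ → MvPolynomial (Fin n) ℝ) (v : ℝ),
      (∀ l, (P l).totalDegree ≤ m) → (∀ l, avA f (P l) (cen (j + l) w) (4 * hh (j + l)) ≤ e l) →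
      Tendsto (fun r : ℝ => ⨍ y in closedBall w r, f y) (𝓝[>] 0) (𝓝 v) →
      ENNReal.ofReal |v - MvPolynomial.eval w (P 0)| ≤ C * ∑' l, e l := by
  obtain ⟨C, hC, h⟩ := comp_poly m hn
  refine ⟨8 ^ n + C * 2, by finiteness, ?_⟩
  intro f hf hfi w j e P v hP he hv
  have hsub1 : ∀ l, closedBall w (hh (j + l)) ⊆ closedBall (cen (j + l) w) (4 * hh (j + l)) := by
    intro l y hy
    rw [mem_closedBall] at *
    linarith [dist_triangle y w (cen (j + l) w), dist_cen (j + l) w, hh_pos (j + l)]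
  have hmono : ∀ l, closedBall w (hh (j + (l + 1))) ⊆ closedBall w (hh (j + l)) :=
    fun l => closedBall_subset_closedBall (hh_anti (by omega))
  have step : ∀ i, ∀ y ∈ closedBall w (hh (j + i)), ENNReal.ofReal |MvPolynomial.eval y (P i) - MvPolynomial.eval y (P 0)| ≤
      C * (∑ l ∈ Finset.range i, (e (l + 1) + e l)) := by
    intro i
    induction i with
    | zero => intro y _; simp
    | succ i ih =>
      intro y hy
      have h1 := ih y (hmono i hy)
      have h2 := h f hf (P (i + 1)) (P i) (hP _) (hP _) w (cen (j + (i + 1)) w) (cen (j + i) w)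
        (hh (j + (i + 1))) (4 * hh (j + (i + 1))) (4 * hh (j + i)) (hh_pos _) (by linarith [hh_le (j + (i + 1))])
        (by linarith [hh_pos (j + (i + 1))]) (by linarith [hh_pos (j + i)]) (by linarith [hh_pos (j + (i + 1))])
        (by rw [hh_succ (j + i)]; apply le_of_eq; rw [add_assoc]; ring) (hsub1 _) ((hmono i).trans (hsub1 i)) y hy
      rw [Finset.sum_range_succ, mul_add, add_comm (C * _)]
      refine le_trans ?_ (add_le_add (h2.trans (mul_le_mul_right (add_le_add (he _) (he _)) C)) h1)
      rw [← ENNReal.ofReal_add (abs_nonneg _) (abs_nonneg _)]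
      exact ENNReal.ofReal_le_ofReal (abs_sub_le _ _ _)
  have hav : ∀ i, ENNReal.ofReal |(⨍ y in closedBall w (hh (j + i)), f y) - ⨍ y in closedBall w (hh (j + i)), MvPolynomial.eval y (P 0)|
      ≤ (8 ^ n + C * 2) * ∑' l, e l := by
    intro i
    have hr := hh_pos (j + i)
    have hi1 : IntegrableOn f (closedBall w (hh (j + i))) := hfi.integrableOn_isCompact (isCompact_closedBall _ _)
    have hi2 : IntegrableOn (fun y => MvPolynomial.eval y (P 0)) (closedBall w (hh (j + i))) :=
      (poly_cont (P 0)).continuousOn.integrableOn_compact (isCompact_closedBall _ _)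
    have h1 : ENNReal.ofReal |(⨍ y in closedBall w (hh (j + i)), f y) - ⨍ y in closedBall w (hh (j + i)), MvPolynomial.eval y (P 0)| ≤ avA f (P 0) w (hh (j + i)) := by
      rw [setAverage_eq, setAverage_eq, ← smul_sub, ← integral_sub hi1 hi2, smul_eq_mul, abs_mul,
        ENNReal.ofReal_mul (abs_nonneg _)]
      unfold avA avg
      refine mul_le_mul' (le_of_eq ?_) ?_
      · rw [abs_of_nonneg (by positivity), ENNReal.ofReal_inv_of_pos, Measure.real, ENNReal.ofReal_toReal (vol_cb_ne_top _ _)]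
        exact ENNReal.toReal_pos (vol_cb_ne_zero w hr) (vol_cb_ne_top _ _)
      · have := enorm_integral_le_lintegral_enorm (μ := volume.restrict (closedBall w (hh (j + i)))) (fun y => f y - MvPolynomial.eval y (P 0))
        simpa only [Real.enorm_eq_ofReal_abs] using this
    refine h1.trans ?_
    have h2 : avA f (P 0) w (hh (j + i)) ≤ avA f (P i) w (hh (j + i)) + avg (fun y => ENNReal.ofReal |MvPolynomial.eval y (P i) - MvPolynomial.eval y (P 0)|) w (hh (j + i)) := by
      refine avg_add_le (ENNReal.measurable_ofReal.comp ((hf.sub (poly_cont (P i)).measurable).abs)) fun y _ => ?_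
      rw [← ENNReal.ofReal_add (abs_nonneg _) (abs_nonneg _)]
      exact ENNReal.ofReal_le_ofReal (abs_sub_le _ _ _)
    refine h2.trans ?_
    rw [add_mul]
    refine add_le_add ?_ ?_
    · refine (avg_mono _ hr (by linarith : 0 < 4 * hh (j + i)) (by linarith) (hsub1 i)).trans ?_
      gcongr
      exact (he i).trans (ENNReal.le_tsum i)
    · refine (avg_le_of hr (step i)).trans ?_
      rw [mul_assoc]
      gcongr
      rw [Finset.sum_add_distrib, two_mul]
      refine add_le_add ?_ (ENNReal.sum_le_tsum _)
      exact (ENNReal.sum_le_tsum _).trans (ENNReal.tsum_comp_le_tsum_of_injective (add_left_injective 1) e)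
  have hlim2 : Tendsto (fun r : ℝ => ⨍ y in closedBall w r, MvPolynomial.eval y (P 0)) (𝓝[>] 0) (𝓝 (MvPolynomial.eval w (P 0))) := by
    rw [Metric.tendsto_nhds]
    intro ε hε
    obtain ⟨δ, hδ, hd⟩ := Metric.continuous_iff.mp (poly_cont (P 0)) w (ε / 2) (half_pos hε)
    filter_upwards [Ioo_mem_nhdsGT hδ] with r hr
    have hi2 : IntegrableOn (fun y => MvPolynomial.eval y (P 0)) (closedBall w r) :=
      (poly_cont (P 0)).continuousOn.integrableOn_compact (isCompact_closedBall _ _)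
    have hv0 := vol_cb_ne_zero w hr.1
    have hvt := vol_cb_ne_top w r
    have : (⨍ y in closedBall w r, MvPolynomial.eval y (P 0)) ∈ closedBall (MvPolynomial.eval w (P 0)) (ε / 2) := by
      refine (convex_closedBall _ _).set_average_mem isClosed_closedBall hv0 hvt ?_ hi2
      refine (ae_restrict_iff' isClosed_closedBall.measurableSet).mpr (Eventually.of_forall fun y hy => ?_)
      exact (hd y ((mem_closedBall.mp hy).trans_lt hr.2)).le
    exact (mem_closedBall.mp this).trans_lt (by linarith)
  have hT := ((ENNReal.continuous_ofReal.comp continuous_abs).tendsto _).comp (((hv.sub hlim2).comp (hh_tendsto j)))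
  exact le_of_tendsto' hT hav

theorem exists_poly {n : ℕ} (m : ℕ) (f : Rn n → ℝ) (z : Rn n) (r : ℝ) {δ : ℝ≥0∞} (hδ : δ ≠ 0) :
    ∃ P : MvPolynomial (Fin n) ℝ, P.totalDegree ≤ m ∧ avA f P z r ≤ localApprox (m + 1) 1 f z r + δ := by
  by_cases h : localApprox (m + 1) 1 f z r = ⊤
  · exact ⟨0, by simp, by simp [h]⟩
  · have h1 : localApprox (m + 1) 1 f z r < localApprox (m + 1) 1 f z r + δ := ENNReal.lt_add_right h hδ
    have h2 := h1
    rw [localApprox_eq, ← localApprox_eq (m + 1) f z r] at h2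
    rw [localApprox_eq] at h1
    simp only [iInf_lt_iff] at h1
    obtain ⟨P, hP, h3⟩ := h1
    refine ⟨P, by simpa using hP, ?_⟩
    rw [localApprox_eq]
    exact h3.le

def FF {n : ℕ} (k : ℕ) (f : Rn n → ℝ) (j : ℕ) (x : Rn n) : ℝ≥0∞ := ∑' i, EE k f (j + i) x

theorem FF_meas {n : ℕ} (k : ℕ) (f : Rn n → ℝ) (j : ℕ) : Measurable (FF k f j) :=
  Measurable.ennreal_tsum fun i => EE_meas k f (j + i)

theorem EE_le_FF {n : ℕ} (k : ℕ) (f : Rn n → ℝ) (j : ℕ) (x : Rn n) : EE k f j x ≤ FF k f j x :=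
  ENNReal.le_tsum (f := fun i => EE k f (j + i) x) 0

theorem pointwise_s1 {n : ℕ} (m : ℕ) (hn : 1 ≤ n) {d a b : ℝ} (hd : (n : ℝ) - 1 < d) (hd0 : 0 < d) {μ : Measure (Rn n)} {S : Set (Rn n)}
    (hR : Reg μ S d a b) (hS : IsClosed S) (hne : S.Nonempty) : ∃ C : ℝ≥0∞, C ≠ ⊤ ∧ ∀ f : Rn n → ℝ, Measurable f → LocallyIntegrable f →
    (∀ᵐ w ∂μ, Tendsto (fun r : ℝ => ⨍ y in closedBall w r, f y) (𝓝[>] 0) (𝓝 0)) → ∀ x : Rn n,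
      Tendsto (fun r : ℝ => ⨍ y in closedBall x r, f y) (𝓝[>] 0) (𝓝 (f x)) → ∀ j, infDist x S ≤ hh j →
      ENNReal.ofReal |f x| ≤ C * (FF (m + 1) f j x + ENNReal.ofReal ((hh j) ^ (-d)) * ∫⁻ w in closedBall x (2 * hh j), FF (m + 1) f j w ∂μ) := by
  obtain ⟨Ct, hCt, ht⟩ := telescope (n := n) m hn
  obtain ⟨Cc, hCc, hc⟩ := comp_poly (n := n) m hn
  obtain ⟨Cm, hCm, hm⟩ := markov m hn hd hd0 hR
  set K := Ct + Cc with hK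
  set C := Ct + ENNReal.ofReal Cm * K * ENNReal.ofReal b + ENNReal.ofReal Cm * K with hCdef
  have hCtop : C ≠ ⊤ := by rw [hCdef, hK]; finiteness
  refine ⟨C, hCtop, ?_⟩
  intro f hf hfi htr x hx j hj
  set A := FF (m + 1) f j x with hA
  set I := ENNReal.ofReal ((hh j) ^ (-d)) * ∫⁻ w in closedBall x (2 * hh j), FF (m + 1) f j w ∂μ with hI
  have hh0 := hh_pos j
  have main : ∀ ε : ℝ≥0∞, ε ≠ 0 → ENNReal.ofReal |f x| ≤ C * (A + I + 2 * ε) := by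
    intro ε hε
    obtain ⟨δ, hδ, hδs⟩ := ENNReal.exists_pos_sum_of_countable' hε ℕ
    choose P hP1 hP2 using fun (l : ℕ) (z : Rn n) => exists_poly m f z (4 * hh (j + l)) (hδ l).ne'
    have T : ∀ y v, Tendsto (fun r : ℝ => ⨍ y in closedBall y r, f y) (𝓝[>] 0) (𝓝 v) →
        ENNReal.ofReal |v - MvPolynomial.eval y (P 0 (cen j y))| ≤ Ct * (FF (m + 1) f j y + ε) := by
      intro y v hv
      refine (ht f hf hfi y j (fun l => EE (m + 1) f (j + l) y + δ l) (fun l => P l (cen (j + l) y)) v (fun l => hP1 _ _)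
        (fun l => hP2 _ _) hv).trans ?_
      rw [ENNReal.tsum_add]
      gcongr
      exact le_rfl
    have hP20 : ∀ y, avA f (P 0 (cen j y)) (cen j y) (4 * hh j) ≤ FF (m + 1) f j y + ε := by
      intro y
      refine (hP2 0 (cen j y)).trans (add_le_add (EE_le_FF (m + 1) f j y) ((ENNReal.le_tsum 0).trans hδs.le))
    obtain ⟨w0, hw0, hd0⟩ := hS.exists_infDist_eq_dist hne x
    have hxw : dist x w0 ≤ hh j := hd0 ▸ hj
    have hmk := hm (P 0 (cen j x)) (hP1 _ _) w0 hw0 (hh j) (hh_pos j) (by linarith [hh_le j]) x hxw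
    have hw : ∀ᵐ w ∂μ, w ∈ closedBall w0 (hh j) → ENNReal.ofReal |MvPolynomial.eval w (P 0 (cen j x))| ≤
        K * (A + 2 * ε) + K * FF (m + 1) f j w := by
      filter_upwards [htr] with w hw hwb
      have h1 := T w 0 hw
      have hwx : dist w x ≤ 2 * hh j := by
        have := dist_triangle w w0 x
        rw [dist_comm w0 x] at this
        linarith [mem_closedBall.mp hwb]
      have h2 := hc f hf (P 0 (cen j x)) (P 0 (cen j w)) (hP1 _ _) (hP1 _ _) w (cen j x) (cen j w) (hh j) (4 * hh j) (4 * hh j)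
        hh0 (by linarith [hh_le j]) (by linarith) (by linarith) (by linarith) (by linarith) ?_ ?_ w (mem_closedBall_self hh0.le)
      · have h3 : ENNReal.ofReal |MvPolynomial.eval w (P 0 (cen j x))| ≤ ENNReal.ofReal |MvPolynomial.eval w (P 0 (cen j x)) - MvPolynomial.eval w (P 0 (cen j w))| + ENNReal.ofReal |0 - MvPolynomial.eval w (P 0 (cen j w))| := by
          rw [← ENNReal.ofReal_add (abs_nonneg _) (abs_nonneg _)]
          refine ENNReal.ofReal_le_ofReal ?_
          rw [zero_sub, abs_neg]
          have := abs_sub_abs_le_abs_sub (MvPolynomial.eval w (P 0 (cen j x))) (MvPolynomial.eval w (P 0 (cen j w)))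
          linarith
        refine h3.trans ((add_le_add (h2.trans (mul_le_mul_right (add_le_add (hP20 x) (hP20 w)) _)) h1).trans ?_)
        rw [hK, ← hA]
        calc _ = Cc * (A + 2 * ε + FF (m + 1) f j w) + Ct * (0 + ε + FF (m + 1) f j w) := by ring
          _ ≤ Cc * (A + 2 * ε + FF (m + 1) f j w) + Ct * (A + 2 * ε + FF (m + 1) f j w) := by
            gcongr
            · exact zero_le
            · rw [two_mul]; exact le_self_add
          _ = _ := by ring
      · intro y hy
        rw [mem_closedBall] at *
        linarith [dist_triangle y w (cen j x), dist_triangle w x (cen j x), dist_cen j x]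
      · intro y hy
        rw [mem_closedBall] at *
        linarith [dist_triangle y w (cen j w), dist_cen j w]
    have hsub : closedBall w0 (hh j) ⊆ closedBall x (2 * hh j) := by
      intro y hy
      rw [mem_closedBall] at *
      have := dist_triangle y w0 x
      rw [dist_comm w0 x] at this
      linarith
    have hint : ∫⁻ w in closedBall w0 (hh j), ENNReal.ofReal |MvPolynomial.eval w (P 0 (cen j x))| ∂μ ≤
        K * (A + 2 * ε) * ENNReal.ofReal (b * (hh j) ^ d) + K * ∫⁻ w in closedBall x (2 * hh j), FF (m + 1) f j w ∂μ := by
      calc _ ≤ ∫⁻ w in closedBall w0 (hh j), (K * (A + 2 * ε) + K * FF (m + 1) f j w) ∂μ :=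
            setLIntegral_mono_ae' isClosed_closedBall.measurableSet hw
        _ = K * (A + 2 * ε) * μ (closedBall w0 (hh j)) + K * ∫⁻ w in closedBall w0 (hh j), FF (m + 1) f j w ∂μ := by
            rw [lintegral_add_left measurable_const, setLIntegral_const, lintegral_const_mul _ (FF_meas _ _ _)]
        _ ≤ _ := by
          gcongr
          exact (hR.2.2.2 w0 hw0 (hh j) hh0 (by linarith [hh_le j])).2
    have h4 := hmk.trans (mul_le_mul_right hint _)
    have h5 := T x (f x) hx
    have h6 : ENNReal.ofReal |f x| ≤ ENNReal.ofReal |f x - MvPolynomial.eval x (P 0 (cen j x))| + ENNReal.ofReal |MvPolynomial.eval x (P 0 (cen j x))| := by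
      rw [← ENNReal.ofReal_add (abs_nonneg _) (abs_nonneg _)]
      refine ENNReal.ofReal_le_ofReal ?_
      have := abs_sub_abs_le_abs_sub (f x) (MvPolynomial.eval x (P 0 (cen j x)))
      linarith
    refine h6.trans ((add_le_add h5 h4).trans ?_)
    have e1 : ENNReal.ofReal (Cm * hh j ^ (-d)) = ENNReal.ofReal Cm * ENNReal.ofReal (hh j ^ (-d)) := ENNReal.ofReal_mul hCm.le
    have e2 : ENNReal.ofReal (b * hh j ^ d) = ENNReal.ofReal b * ENNReal.ofReal (hh j ^ d) := ENNReal.ofReal_mul hR.2.2.1.le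
    have e3 : ENNReal.ofReal (hh j ^ (-d)) * ENNReal.ofReal (hh j ^ d) = 1 := by
      rw [← ENNReal.ofReal_mul (by positivity), ← Real.rpow_add hh0]; simp
    rw [e1, e2, ← hA, hCdef]
    calc _ = Ct * (A + 0 + ε) + (ENNReal.ofReal Cm * K * ENNReal.ofReal b * (A + 0 + 2 * ε)) * (ENNReal.ofReal (hh j ^ (-d)) * ENNReal.ofReal (hh j ^ d))
          + ENNReal.ofReal Cm * K * (0 + I + 0) := by rw [hI]; ring
      _ ≤ Ct * (A + I + 2 * ε) + (ENNReal.ofReal Cm * K * ENNReal.ofReal b * (A + I + 2 * ε)) * 1 + ENNReal.ofReal Cm * K * (A + I + 2 * ε) := by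
        rw [e3]
        gcongr
        · exact zero_le
        · rw [two_mul]; exact le_self_add
        · exact zero_le
        · exact zero_le
        · exact zero_le
      _ = _ := by ring
  have hlim : Tendsto (fun i : ℕ => C * (A + I + 2 * (i : ℝ≥0∞)⁻¹)) atTop (𝓝 (C * (A + I + 2 * 0))) := by
    refine ENNReal.Tendsto.const_mul (tendsto_const_nhds.add (ENNReal.Tendsto.const_mul ENNReal.tendsto_inv_nat_nhds_zero (Or.inr (by simp)))) (Or.inr hCtop)
  have := ge_of_tendsto' hlim (fun i => main _ (by simp))
  simpa using this

theorem leb_pt {n : ℕ} (f : Rn n → ℝ) (hfi : LocallyIntegrable f) : ∀ᵐ x : Rn n,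
    Tendsto (fun r : ℝ => ⨍ y in closedBall x r, f y) (𝓝[>] 0) (𝓝 (f x)) := by
  filter_upwards [IsUnifLocDoublingMeasure.ae_tendsto_average (μ := (volume : Measure (Rn n))) hfi 1] with x hx
  exact hx (fun _ => x) id tendsto_id (by
    filter_upwards [self_mem_nhdsWithin] with r hr
    simpa using (le_of_lt hr : (0:ℝ) ≤ r))

theorem Reg.sfinite {n : ℕ} {μ : Measure (Rn n)} {S : Set (Rn n)} {d a b : ℝ} (h : Reg μ S d a b) : SFinite μ := by
  have : IsLocallyFiniteMeasure μ := by
    refine ⟨fun x => ⟨closedBall x (1 / 2), closedBall_mem_nhds x (by norm_num), ?_⟩⟩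
    exact (h.upper x (1 / 2) (by norm_num) le_rfl).trans_lt ENNReal.ofReal_lt_top
  infer_instance

theorem swap_set {n : ℕ} (μ ν : Measure (Rn n)) [SFinite μ] [SFinite ν] {A : Set (Rn n × Rn n)} (hA : MeasurableSet A)
    {G : Rn n → ℝ≥0∞} (hG : Measurable G) :
    ∫⁻ x, ∫⁻ w in {w | (x, w) ∈ A}, G w ∂μ ∂ν = ∫⁻ w, G w * ν {x | (x, w) ∈ A} ∂μ := by
  have h1 : ∀ x, MeasurableSet {w | (x, w) ∈ A} := fun x => measurable_prodMk_left hA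
  have h2 : ∀ w, MeasurableSet {x | (x, w) ∈ A} := fun w => measurable_prodMk_right hA
  calc _ = ∫⁻ x, ∫⁻ w, A.indicator (fun z => G z.2) (x, w) ∂μ ∂ν := by
        refine lintegral_congr fun x => ?_
        rw [← lintegral_indicator (h1 x)]
        rfl
    _ = ∫⁻ w, ∫⁻ x, A.indicator (fun z => G z.2) (x, w) ∂ν ∂μ :=
        lintegral_lintegral_swap ((hG.comp measurable_snd).indicator hA).aemeasurable
    _ = _ := by
        refine lintegral_congr fun w => ?_
        rw [← setLIntegral_const, ← lintegral_indicator (h2 w)]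
        rfl

theorem holder_pow {n : ℕ} (μ : Measure (Rn n)) {p : ℝ} (hp : 1 < p) {F : Rn n → ℝ≥0∞} (hF : Measurable F) :
    (∫⁻ x, F x ∂μ) ^ p ≤ (μ univ) ^ (p - 1) * ∫⁻ x, F x ^ p ∂μ := by
  have hpq := Real.HolderConjugate.conjExponent hp
  have h := ENNReal.lintegral_mul_le_Lp_mul_Lq μ hpq hF.aemeasurable (aemeasurable_const (b := (1 : ℝ≥0∞)))
  simp only [Pi.mul_apply, mul_one, ENNReal.one_rpow, lintegral_const, one_mul] at h
  have hp0 : 0 < p := by linarith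
  refine (ENNReal.rpow_le_rpow h hp0.le).trans (le_of_eq ?_)
  rw [ENNReal.mul_rpow_of_nonneg _ _ hp0.le, ← ENNReal.rpow_mul, ← ENNReal.rpow_mul, mul_comm]
  congr 2
  · rw [Real.conjExponent]; field_simp
  · rw [one_div, inv_mul_cancel₀ hp0.ne', ENNReal.rpow_one]

theorem tonelli {n : ℕ} {d a b p : ℝ} (hd0 : 0 < d) (hp : 1 < p) {μ : Measure (Rn n)} {S : Set (Rn n)}
    (hR : Reg μ S d a b) : ∃ C : ℝ≥0∞, C ≠ ⊤ ∧ ∀ F : Rn n → ℝ≥0∞, Measurable F → ∀ j,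
      ∫⁻ x, (ENNReal.ofReal ((hh j) ^ (-d)) * ∫⁻ w in closedBall x (2 * hh j), F w ∂μ) ^ p ≤
        C * (ENNReal.ofReal ((hh j) ^ ((n : ℝ) - d)) * ∫⁻ w, F w ^ p ∂μ) := by
  have := hR.sfinite
  have hp0 : 0 < p := by linarith
  refine ⟨ENNReal.ofReal ((b * 4 ^ d) ^ (p - 1) * 4 ^ n), by finiteness, ?_⟩
  intro F hF j
  have hh0 := hh_pos j
  have hb := hR.2.2.1
  have hA : MeasurableSet {z : Rn n × Rn n | dist z.2 z.1 ≤ 2 * hh j} :=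
    (isClosed_le (continuous_snd.dist continuous_fst) continuous_const).measurableSet
  have hpt : ∀ x : Rn n, (ENNReal.ofReal ((hh j) ^ (-d)) * ∫⁻ w in closedBall x (2 * hh j), F w ∂μ) ^ p ≤
      ENNReal.ofReal (((hh j) ^ (-d)) ^ p * (b * (4 * hh j) ^ d) ^ (p - 1)) * ∫⁻ w in closedBall x (2 * hh j), F w ^ p ∂μ := by
    intro x
    rw [ENNReal.mul_rpow_of_nonneg _ _ hp0.le, ENNReal.ofReal_mul (by positivity), mul_assoc]
    refine mul_le_mul' (le_of_eq ?_) ((holder_pow _ hp hF).trans (mul_le_mul' ?_ le_rfl))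
    · rw [ENNReal.ofReal_rpow_of_pos (by positivity)]
    · rw [Measure.restrict_apply_univ, ← ENNReal.ofReal_rpow_of_pos (by positivity)]
      refine ENNReal.rpow_le_rpow ?_ (by linarith)
      convert hR.upper x (2 * hh j) (by linarith) (by linarith [hh_le j]) using 4
      ring
  refine (lintegral_mono hpt).trans ?_
  rw [lintegral_const_mul' _ _ (by finiteness)]
  have hs := swap_set μ volume hA (hF.pow_const p)
  have e1 : ∀ x : Rn n, {w | (x, w) ∈ {z : Rn n × Rn n | dist z.2 z.1 ≤ 2 * hh j}} = closedBall x (2 * hh j) := fun x => rfl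
  have e2 : ∀ w : Rn n, {x | (x, w) ∈ {z : Rn n × Rn n | dist z.2 z.1 ≤ 2 * hh j}} = closedBall w (2 * hh j) := by
    intro w; ext x; simp [dist_comm]
  simp only [e1, e2] at hs
  rw [hs]
  simp only [vol_cb _ (by linarith : 0 ≤ 2 * hh j)]
  rw [lintegral_mul_const _ (hF.pow_const p), mul_comm (∫⁻ _, _ ∂μ), ← mul_assoc, ← mul_assoc, ← ENNReal.ofReal_mul (by positivity)]
  rw [← mul_assoc, ← ENNReal.ofReal_mul (by positivity)]
  refine mul_le_mul' (ENNReal.ofReal_le_ofReal (le_of_eq ?_)) le_rfl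
  rw [Real.mul_rpow (by norm_num) hh0.le, ← mul_assoc b, Real.mul_rpow (by positivity) (by positivity), ← Real.rpow_mul hh0.le,
    ← Real.rpow_mul hh0.le, show (2 * 2 * hh j) ^ n = 4 ^ n * (hh j) ^ (n : ℝ) by rw [mul_pow, Real.rpow_natCast]; norm_num,
    show (n : ℝ) - d = -d * p + d * (p - 1) + n by ring, Real.rpow_add hh0, Real.rpow_add hh0]
  ring

theorem dist_of_cen {n : ℕ} {j : ℕ} {x y : Rn n} (h : cen j x = cen j y) : dist x y ≤ hh j := by
  rw [dist_pi_le_iff (hh_pos j).le]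
  intro i
  have h0 := congrFun h i
  simp only [cen] at h0
  have h1 := Int.floor_le (x i / hh j)
  have h2 := Int.lt_floor_add_one (x i / hh j)
  have h3 := Int.floor_le (y i / hh j)
  have h4 := Int.lt_floor_add_one (y i / hh j)
  rw [le_div_iff₀ (hh_pos j)] at h1 h3
  rw [div_lt_iff₀ (hh_pos j)] at h2 h4
  rw [Real.dist_eq, abs_le]
  constructor <;> linarith

theorem cell_meas {n : ℕ} (j : ℕ) (w : Rn n) : MeasurableSet {x : Rn n | cen j x = cen j w} :=
  measurableSet_eq_fun (measurable_of_cen id j) measurable_const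

theorem cell_vol {n : ℕ} (j : ℕ) (w : Rn n) : ENNReal.ofReal ((hh j) ^ n) ≤ volume {x : Rn n | cen j x = cen j w} := by
  have h1 : volume (Set.pi univ fun i => Ico (cen j w i) (cen j w i + hh j)) = ENNReal.ofReal ((hh j) ^ n) := by
    rw [Real.volume_pi_Ico]; simp [ENNReal.ofReal_pow (hh_pos j).le]
  rw [← h1]
  refine measure_mono fun x hx => ?_
  have hh0 := hh_pos j
  funext i
  have := hx i (mem_univ i)
  simp only [cen] at this ⊢
  have : ⌊x i / hh j⌋ = ⌊w i / hh j⌋ := by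
    rw [Int.floor_eq_iff, le_div_iff₀ hh0, div_lt_iff₀ hh0]
    exact ⟨this.1, by linarith [this.2]⟩
  rw [this]

theorem infDist_meas {n : ℕ} (S : Set (Rn n)) : Measurable fun x : Rn n => infDist x S :=
  (continuous_infDist_pt S).measurable

theorem porosity {n : ℕ} {d a b : ℝ} (hd0 : 0 < d) (hdn : d < n) {μ : Measure (Rn n)} {S : Set (Rn n)}
    (hR : Reg μ S d a b) : ∃ M : ℕ, ∀ j, ∀ w ∈ S,
      ENNReal.ofReal ((hh j) ^ n / 2) ≤ volume {x : Rn n | cen j x = cen j w ∧ hh (j + M) ≤ infDist x S} := by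
  have := hR.sfinite
  obtain ⟨_, ha, hb, hreg⟩ := id hR
  set K : ℝ := a⁻¹ * b * 4 ^ n * 4 ^ d with hK
  have hK0 : 0 < K := by positivity
  obtain ⟨M, hM⟩ : ∃ M : ℕ, K * ((1 / 2 : ℝ) ^ ((n : ℝ) - d)) ^ M ≤ 1 / 2 := by
    have h1 : Tendsto (fun M : ℕ => K * ((1 / 2 : ℝ) ^ ((n : ℝ) - d)) ^ M) atTop (𝓝 (K * 0)) :=
      (tendsto_pow_atTop_nhds_zero_of_lt_one (by positivity) (Real.rpow_lt_one (by norm_num) (by norm_num) (by linarith))).const_mul K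
    rw [mul_zero] at h1
    exact ((h1.eventually (gt_mem_nhds (by norm_num : (0:ℝ) < 1 / 2))).exists).imp fun _ h => h.le
  refine ⟨M, fun j w hw => ?_⟩
  set ρ := hh (j + M) with hρ
  have hρ0 : 0 < ρ := hh_pos _
  have hh0 := hh_pos j
  have hρh : ρ ≤ hh j := hh_anti (by omega)
  have hh1 := hh_le j
  set V := {x : Rn n | cen j x = cen j w} with hV
  set B := {x : Rn n | cen j x = cen j w ∧ infDist x S < ρ} with hB
  have hBm : MeasurableSet B := (cell_meas j w).inter (measurableSet_lt (infDist_meas S) measurable_const)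
  have hA : MeasurableSet {z : Rn n × Rn n | dist z.2 z.1 ≤ 2 * ρ} :=
    (isClosed_le (continuous_snd.dist continuous_fst) continuous_const).measurableSet
  have hs := swap_set μ (volume.restrict B) hA (measurable_const (a := (1 : ℝ≥0∞)))
  simp only [setLIntegral_one, one_mul] at hs
  have hlow : ENNReal.ofReal (a * ρ ^ d) * volume B ≤ ∫⁻ x in B, μ {w | (x, w) ∈ {z : Rn n × Rn n | dist z.2 z.1 ≤ 2 * ρ}} := by
    rw [← setLIntegral_const]
    refine setLIntegral_mono' hBm fun x hx => ?_
    obtain ⟨y, hy, hxy⟩ := (infDist_lt_iff ⟨w, hw⟩).mp hx.2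
    refine (hreg y hy ρ hρ0 (by linarith)).1.trans (measure_mono fun z hz => ?_)
    rw [mem_closedBall] at hz
    simp only [mem_setOf_eq]
    rw [dist_comm x y] at hxy
    linarith [dist_triangle z y x]
  have hup : ∫⁻ v, (volume.restrict B) {x | (x, v) ∈ {z : Rn n × Rn n | dist z.2 z.1 ≤ 2 * ρ}} ∂μ ≤
      ENNReal.ofReal ((4 * ρ) ^ n) * ENNReal.ofReal (b * (4 * hh j) ^ d) := by
    calc _ ≤ ∫⁻ v, (closedBall w (4 * hh j)).indicator (fun _ => ENNReal.ofReal ((4 * ρ) ^ n)) v ∂μ := by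
          refine lintegral_mono fun v => ?_
          by_cases hv : v ∈ closedBall w (4 * hh j)
          · simp only [indicator_of_mem hv]
            refine (Measure.restrict_apply_le _ _).trans ?_
            have : {x | (x, v) ∈ {z : Rn n × Rn n | dist z.2 z.1 ≤ 2 * ρ}} = closedBall v (2 * ρ) := by
              ext x; simp [dist_comm]
            rw [this, vol_cb v (by linarith)]
            apply le_of_eq; congr 2; ring
          · simp only [indicator_of_notMem hv, nonpos_iff_eq_zero]
            have hm2 : MeasurableSet {x | (x, v) ∈ {z : Rn n × Rn n | dist z.2 z.1 ≤ 2 * ρ}} := measurable_prodMk_right hA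
            rw [Measure.restrict_apply hm2]
            convert measure_empty (μ := volume) using 2
            rw [eq_empty_iff_forall_notMem]
            rintro x ⟨hx1, hx2⟩
            apply hv
            have h2 := dist_of_cen hx2.1
            simp only [mem_setOf_eq] at hx1
            rw [mem_closedBall]
            linarith [dist_triangle v x w]
      _ = ENNReal.ofReal ((4 * ρ) ^ n) * μ (closedBall w (4 * hh j)) := by
          rw [lintegral_indicator isClosed_closedBall.measurableSet, setLIntegral_const]
      _ ≤ _ := by
        gcongr
        exact (hreg w hw _ (by linarith) (by linarith)).2
  have hBv : volume B ≤ ENNReal.ofReal ((hh j) ^ n / 2) := by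
    have h1 := hlow.trans (hs.le.trans hup)
    rw [← ENNReal.ofReal_mul (by positivity)] at h1
    have h2 : ENNReal.ofReal (a * ρ ^ d) ≠ 0 := by
      simp only [ne_eq, ENNReal.ofReal_eq_zero, not_le]; positivity
    rw [mul_comm, ← ENNReal.le_div_iff_mul_le (Or.inl h2) (Or.inl ENNReal.ofReal_ne_top), ← ENNReal.ofReal_div_of_pos (by positivity)] at h1
    refine h1.trans (ENNReal.ofReal_le_ofReal ?_)
    have h3 : (4 * ρ) ^ n * (b * (4 * hh j) ^ d) / (a * ρ ^ d) = K * ((1 / 2 : ℝ) ^ ((n : ℝ) - d)) ^ M * (hh j) ^ n := by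
      have e1 : ρ ^ n = ρ ^ ((n : ℝ) - d) * ρ ^ d := by rw [← Real.rpow_add hρ0]; simp
      have e2 : ρ ^ ((n : ℝ) - d) = ((1 / 2 : ℝ) ^ ((n : ℝ) - d)) ^ M * (hh j) ^ ((n : ℝ) - d) := by
        rw [hρ, hh_add, Real.mul_rpow (by positivity) hh0.le, ← Real.rpow_natCast, ← Real.rpow_mul (by norm_num), mul_comm (M : ℝ), Real.rpow_mul (by norm_num), Real.rpow_natCast]
      have e3 : (hh j) ^ n = (hh j) ^ ((n : ℝ) - d) * (hh j) ^ d := by rw [← Real.rpow_add hh0]; simp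
      rw [mul_pow, e1, e2, e3, hK, Real.mul_rpow (by norm_num) hh0.le]
      have : 0 < ρ ^ d := by positivity
      field_simp
    rw [h3]
    have : 0 < hh j ^ n := by positivity
    nlinarith
  have hVu : volume V ≤ volume {x : Rn n | cen j x = cen j w ∧ ρ ≤ infDist x S} + volume B := by
    refine (measure_mono ?_).trans (measure_union_le _ _)
    intro x hx
    rcases lt_or_ge (infDist x S) ρ with h | h
    · exact Or.inr ⟨hx, h⟩
    · exact Or.inl ⟨hx, h⟩
  have h5 := (cell_vol j w).trans (hVu.trans (add_le_add le_rfl hBv))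
  have h6 : ENNReal.ofReal (hh j ^ n) = ENNReal.ofReal (hh j ^ n / 2) + ENNReal.ofReal (hh j ^ n / 2) := by
    rw [← ENNReal.ofReal_add (by positivity) (by positivity)]; congr 1; ring
  rw [h6] at h5
  exact ENNReal.le_of_add_le_add_right ENNReal.ofReal_ne_top h5

def TT {n : ℕ} (S : Set (Rn n)) (M l : ℕ) : Set (Rn n) := {x | hh (l + M) ≤ infDist x S ∧ infDist x S ≤ hh l}

theorem TT_meas {n : ℕ} (S : Set (Rn n)) (M l : ℕ) : MeasurableSet (TT S M l) :=
  (measurableSet_le measurable_const (infDist_meas S)).inter (measurableSet_le (infDist_meas S) measurable_const)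

theorem transfer {n : ℕ} {d a b p : ℝ} (hd0 : 0 < d) (hdn : d < n) {μ : Measure (Rn n)} {S : Set (Rn n)}
    (hR : Reg μ S d a b) : ∃ M : ℕ, ∃ C : ℝ≥0∞, C ≠ ⊤ ∧ ∀ k f l,
      ∫⁻ w, EE k f l w ^ p ∂μ ≤ C * (ENNReal.ofReal ((hh l) ^ (d - (n : ℝ))) * ∫⁻ x in TT S M l, EE k f l x ^ p) := by
  have := hR.sfinite
  obtain ⟨M, hM⟩ := porosity hd0 hdn hR
  obtain ⟨hSc, ha, hb, hreg⟩ := id hR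
  refine ⟨M, ENNReal.ofReal (2 * b * 2 ^ d), by finiteness, fun k f l => ?_⟩
  have hh0 := hh_pos l
  have hE := (EE_meas k f l).pow_const p
  have hA : MeasurableSet {z : Rn n × Rn n | cen l z.2 = cen l z.1} :=
    measurableSet_eq_fun ((measurable_of_cen id l).comp measurable_snd) ((measurable_of_cen id l).comp measurable_fst)
  have hs := swap_set (volume.restrict (TT S M l)) μ hA hE
  have hlow : ENNReal.ofReal (hh l ^ n / 2) * ∫⁻ w, EE k f l w ^ p ∂μ ≤
      ∫⁻ w, ∫⁻ x in {x | (w, x) ∈ {z : Rn n × Rn n | cen l z.2 = cen l z.1}}, EE k f l x ^ p ∂(volume.restrict (TT S M l)) ∂μ := by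
    rw [← lintegral_const_mul _ hE]
    refine lintegral_mono_ae ?_
    have : ∀ᵐ w ∂μ, w ∈ S := hSc
    filter_upwards [this] with w hw
    have hset : MeasurableSet {x : Rn n | cen l x = cen l w} := cell_meas l w
    change _ ≤ ∫⁻ x in {x : Rn n | cen l x = cen l w}, EE k f l x ^ p ∂volume.restrict (TT S M l)
    have hcg : ∀ x ∈ {x : Rn n | cen l x = cen l w}, EE k f l x ^ p = EE k f l w ^ p := fun x hx => by
      rw [EE_congr k f l hx]
    rw [setLIntegral_congr_fun hset hcg, setLIntegral_const, mul_comm, Measure.restrict_apply hset]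
    gcongr
    refine (hM l w hw).trans (measure_mono ?_)
    intro x hx
    refine ⟨hx.1, hx.2, ?_⟩
    exact (infDist_le_dist_of_mem hw).trans (dist_of_cen hx.1)
  have hup : ∫⁻ x, EE k f l x ^ p * μ {w | (w, x) ∈ {z : Rn n × Rn n | cen l z.2 = cen l z.1}} ∂(volume.restrict (TT S M l)) ≤
      ENNReal.ofReal (b * (2 * hh l) ^ d) * ∫⁻ x in TT S M l, EE k f l x ^ p := by
    rw [← lintegral_const_mul _ hE]
    refine lintegral_mono fun x => ?_
    simp only
    rw [mul_comm]
    gcongr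
    refine (measure_mono ?_).trans (hR.upper x (hh l) hh0 (by linarith [hh_le l]))
    intro w hw
    exact dist_of_cen (Eq.symm hw)
  have h1 := hlow.trans (hs.le.trans hup)
  have h2 : ENNReal.ofReal (hh l ^ n / 2) ≠ 0 := by
    simp only [ne_eq, ENNReal.ofReal_eq_zero, not_le]; positivity
  rw [mul_comm, ← ENNReal.le_div_iff_mul_le (Or.inl h2) (Or.inl ENNReal.ofReal_ne_top)] at h1
  refine h1.trans (le_of_eq ?_)
  rw [← mul_assoc, ← ENNReal.ofReal_mul (by positivity), mul_comm (ENNReal.ofReal _), mul_div_assoc, ← ENNReal.ofReal_div_of_pos (by positivity), mul_comm]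
  congr 2
  rw [Real.mul_rpow (by norm_num) hh0.le, Real.rpow_sub hh0, Real.rpow_natCast]
  field_simp

def pw (j : ℕ) (σ : ℝ) : ℝ≥0∞ := ENNReal.ofReal (hh j ^ σ)

theorem pw_add (j : ℕ) (σ τ : ℝ) : pw j (σ + τ) = pw j σ * pw j τ := by
  unfold pw
  rw [Real.rpow_add (hh_pos j), ENNReal.ofReal_mul (Real.rpow_nonneg (hh_pos j).le _)]

theorem pw_zero (j : ℕ) : pw j 0 = 1 := by simp [pw]

theorem pw_neg_mul (j : ℕ) (σ : ℝ) : pw j σ * pw j (-σ) = 1 := by rw [← pw_add]; simp [pw_zero]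

theorem pw_shift (j i : ℕ) (σ : ℝ) : pw (j + i) σ = (ENNReal.ofReal ((1 / 2 : ℝ) ^ σ)) ^ i * pw j σ := by
  unfold pw
  rw [hh_add, Real.mul_rpow (by positivity) (hh_pos j).le, ENNReal.ofReal_mul (by positivity), ← ENNReal.ofReal_pow (by positivity)]
  congr 2
  rw [← Real.rpow_natCast, ← Real.rpow_mul (by norm_num), mul_comm (i : ℝ), Real.rpow_mul (by norm_num), Real.rpow_natCast]

theorem pw_rpow (j : ℕ) (σ p : ℝ) : (pw j σ) ^ p = pw j (σ * p) := by
  unfold pw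
  rw [ENNReal.ofReal_rpow_of_pos (Real.rpow_pos_of_pos (hh_pos j) _), ← Real.rpow_mul (hh_pos j).le]

theorem pw_ne_top (j : ℕ) (σ : ℝ) : pw j σ ≠ ⊤ := ENNReal.ofReal_ne_top

theorem geo_ne_top {σ : ℝ} (hσ : 0 < σ) : (1 - ENNReal.ofReal ((1 / 2 : ℝ) ^ σ))⁻¹ ≠ ⊤ := by
  rw [ENNReal.inv_ne_top]
  have : ENNReal.ofReal ((1 / 2 : ℝ) ^ σ) < 1 := by
    rw [ENNReal.ofReal_lt_one]
    exact Real.rpow_lt_one (by norm_num) (by norm_num) hσ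
  exact (tsub_pos_of_lt this).ne'

theorem geom_sup {σ : ℝ} (e : ℕ → ℝ≥0∞) (j : ℕ) :
    ∑' i, e (j + i) ≤ (1 - ENNReal.ofReal ((1 / 2 : ℝ) ^ σ))⁻¹ * (pw j σ * ⨆ i, pw (j + i) (-σ) * e (j + i)) := by
  rw [← ENNReal.tsum_geometric, ← ENNReal.tsum_mul_right]
  refine ENNReal.tsum_le_tsum fun i => ?_
  rw [← mul_assoc, ← pw_shift]
  calc e (j + i) = pw (j + i) σ * (pw (j + i) (-σ) * e (j + i)) := by rw [← mul_assoc, pw_neg_mul, one_mul]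
    _ ≤ _ := by
      gcongr
      exact le_iSup (fun i => pw (j + i) (-σ) * e (j + i)) i

theorem iSup_rpow_le {p : ℝ} (hp : 0 < p) (a : ℕ → ℝ≥0∞) : (⨆ i, a i) ^ p ≤ ∑' i, a i ^ p := by
  rw [← ENNReal.le_rpow_inv_iff hp]
  refine iSup_le fun i => ?_
  rw [ENNReal.le_rpow_inv_iff hp]
  exact ENNReal.le_tsum (f := fun i => a i ^ p) i

theorem hardy_sum {n : ℕ} {p γ : ℝ} (hp : 0 < p) (hγ : 0 < γ) : ∃ C : ℝ≥0∞, C ≠ ⊤ ∧ ∀ (μ : Measure (Rn n)) (E : ℕ → Rn n → ℝ≥0∞),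
    (∀ j, Measurable (E j)) → ∑' j, pw j (-γ) * ∫⁻ w, (∑' i, E (j + i) w) ^ p ∂μ ≤ C * ∑' l, pw l (-γ) * ∫⁻ w, E l w ^ p ∂μ := by
  set σ := γ / (2 * p) with hσ
  have hσ0 : 0 < σ := by positivity
  set c1 := (1 - ENNReal.ofReal ((1 / 2 : ℝ) ^ σ))⁻¹ with hc1
  set r := ENNReal.ofReal ((1 / 2 : ℝ) ^ (γ / 2)) with hr
  have h1t : c1 ≠ ⊤ := geo_ne_top hσ0
  have h2t : (1 - r)⁻¹ ≠ ⊤ := geo_ne_top (half_pos hγ)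
  refine ⟨c1 ^ p * (1 - r)⁻¹, ENNReal.mul_ne_top (ENNReal.rpow_ne_top_of_nonneg hp.le h1t) h2t, fun μ E hE => ?_⟩
  have hpt : ∀ j w, (∑' i, E (j + i) w) ^ p ≤ c1 ^ p * (pw j (γ / 2) * ∑' i, pw (j + i) (-(γ / 2)) * E (j + i) w ^ p) := by
    intro j w
    refine (ENNReal.rpow_le_rpow (geom_sup (σ := σ) (fun i => E i w) j) hp.le).trans ?_
    rw [ENNReal.mul_rpow_of_nonneg _ _ hp.le, ENNReal.mul_rpow_of_nonneg _ _ hp.le, pw_rpow]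
    have e1 : σ * p = γ / 2 := by rw [hσ]; field_simp
    rw [e1]
    gcongr
    refine (iSup_rpow_le hp _).trans (le_of_eq ?_)
    congr 1; ext i
    rw [ENNReal.mul_rpow_of_nonneg _ _ hp.le, pw_rpow, neg_mul, e1]
  have hterm : ∀ j, pw j (-γ) * ∫⁻ w, (∑' i, E (j + i) w) ^ p ∂μ ≤
      c1 ^ p * ∑' i, r ^ i * (pw (j + i) (-γ) * ∫⁻ w, E (j + i) w ^ p ∂μ) := by
    intro j
    have hm : ∀ i, Measurable fun w => pw (j + i) (-(γ / 2)) * E (j + i) w ^ p := fun i => ((hE _).pow_const p).const_mul _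
    calc _ ≤ pw j (-γ) * (c1 ^ p * (pw j (γ / 2) * ∑' i, pw (j + i) (-(γ / 2)) * ∫⁻ w, E (j + i) w ^ p ∂μ)) := by
          gcongr
          refine (lintegral_mono (hpt j)).trans (le_of_eq ?_)
          rw [lintegral_const_mul _ ((Measurable.ennreal_tsum hm).const_mul _), lintegral_const_mul _ (Measurable.ennreal_tsum hm), lintegral_tsum (fun i => (hm i).aemeasurable)]
          congr 3; ext i
          rw [lintegral_const_mul _ ((hE _).pow_const p)]
      _ = c1 ^ p * ((pw j (-γ) * pw j (γ / 2)) * ∑' i, pw (j + i) (-(γ / 2)) * ∫⁻ w, E (j + i) w ^ p ∂μ) := by ring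
      _ = _ := by
        congr 1
        rw [← ENNReal.tsum_mul_left]
        congr 1; ext i
        rw [← mul_assoc, ← mul_assoc]
        congr 1
        rw [← pw_add, show -γ = -(γ / 2) + -(γ / 2) by ring, pw_add (j + i), ← mul_assoc]
        congr 1
        rw [show -(γ / 2) + -(γ / 2) + γ / 2 = -(γ / 2) by ring, pw_shift, ← mul_assoc, ← mul_pow, hr, ← ENNReal.ofReal_mul (by positivity), ← Real.rpow_add (by norm_num)]
        simp
  refine (ENNReal.tsum_le_tsum hterm).trans ?_
  rw [ENNReal.tsum_mul_left, mul_assoc]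
  gcongr
  rw [ENNReal.tsum_comm, ← ENNReal.tsum_geometric, ← ENNReal.tsum_mul_right]
  refine ENNReal.tsum_le_tsum fun i => ?_
  rw [ENNReal.tsum_mul_left]
  refine mul_le_mul' le_rfl ?_
  exact ENNReal.tsum_comp_le_tsum_of_injective (add_left_injective i) (fun l => pw l (-γ) * ∫⁻ w, E l w ^ p ∂μ)

def GG {n : ℕ} (k : ℕ) (s : ℝ) (f : Rn n → ℝ) (x : Rn n) : ℝ≥0∞ := ⨆ j, pw j (-s) * EE k f j x

theorem GG_meas {n : ℕ} (k : ℕ) (s : ℝ) (f : Rn n → ℝ) : Measurable (GG k s f) :=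
  Measurable.iSup fun j => (EE_meas k f j).const_mul _

theorem FF_le_GG {n : ℕ} (k : ℕ) (s : ℝ) (f : Rn n → ℝ) (j : ℕ) (x : Rn n) :
    pw j (-s) * FF k f j x ≤ (1 - ENNReal.ofReal ((1 / 2 : ℝ) ^ s))⁻¹ * GG k s f x := by
  have h := geom_sup (σ := s) (fun i => EE k f i x) j
  calc _ ≤ pw j (-s) * ((1 - ENNReal.ofReal ((1 / 2 : ℝ) ^ s))⁻¹ * (pw j s * GG k s f x)) := by
        gcongr
        refine h.trans ?_
        gcongr
        exact iSup_le fun i => le_iSup (fun j => pw j (-s) * EE k f j x) (j + i)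
    _ = (pw j s * pw j (-s)) * ((1 - ENNReal.ofReal ((1 / 2 : ℝ) ^ s))⁻¹ * GG k s f x) := by ring
    _ = _ := by rw [pw_neg_mul, one_mul]

theorem tsum_TT {n : ℕ} (S : Set (Rn n)) (M : ℕ) (c : ℝ≥0∞) (x : Rn n) :
    ∑' l, (TT S M l).indicator (fun _ => c) x ≤ (M + 1) * c := by
  classical
  by_cases h : ∃ l, x ∈ TT S M l
  · have h0 := Nat.find_spec h
    set l0 := Nat.find h
    have hz : ∀ l ∉ Finset.Icc l0 (l0 + M), (TT S M l).indicator (fun _ => c) x = 0 := by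
      intro l hl
      refine indicator_of_notMem (fun hx => hl ?_) _
      rw [Finset.mem_Icc]
      refine ⟨Nat.find_min' h hx, ?_⟩
      by_contra hlt
      push Not at hlt
      have h1 : hh (l0 + M) ≤ hh l := h0.1.trans hx.2
      have h2 : hh l ≤ hh (l0 + M + 1) := hh_anti (by omega)
      have := hh_succ (l0 + M)
      linarith [hh_pos (l0 + M + 1)]
    rw [tsum_eq_sum hz]
    calc _ ≤ ∑ l ∈ Finset.Icc l0 (l0 + M), c := Finset.sum_le_sum fun l _ => indicator_le_self' (fun _ _ => zero_le) x
      _ = _ := by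
        rw [Finset.sum_const, Nat.card_Icc, nsmul_eq_mul]
        congr 1
        have : l0 + M + 1 - l0 = M + 1 := by omega
        rw [this]; push_cast; rfl
  · push Not at h
    simp [indicator_of_notMem (h _)]

theorem sum_TT {n : ℕ} (S : Set (Rn n)) (M : ℕ) {G : Rn n → ℝ≥0∞} (hG : Measurable G) :
    ∑' l, ∫⁻ x in TT S M l, G x ≤ (M + 1) * ∫⁻ x, G x := by
  have : ∀ l, ∫⁻ x in TT S M l, G x = ∫⁻ x, (TT S M l).indicator G x := fun l => by
    rw [lintegral_indicator (TT_meas S M l)]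
  simp only [this]
  rw [← lintegral_tsum (fun l => (hG.indicator (TT_meas S M l)).aemeasurable), ← lintegral_const_mul _ hG]
  refine lintegral_mono fun x => ?_
  refine le_trans (le_of_eq ?_) (tsum_TT S M (G x) x)
  congr 1

/-- domination by the Triebel-Lizorkin square function -/
theorem GG_le {n : ℕ} {s q : ℝ} (hs : 0 < s) (hq : 1 ≤ q) : ∃ C : ℝ≥0∞, C ≠ ⊤ ∧ ∀ (k : ℕ) (f : Rn n → ℝ) (x : Rn n),
    GG k s f x ≤ C * (∫⁻ t in Set.Ioo (0:ℝ) 1, (ENNReal.ofReal (t ^ (-s)) * localApprox k 1 f x t) ^ q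
        * ENNReal.ofReal t⁻¹) ^ (1 / q) := by
  have hq0 : 0 < q := by linarith
  refine ⟨8 ^ n * ENNReal.ofReal (10 ^ s) * 2 ^ (1 / q), by finiteness, fun k f x => iSup_le fun j => ?_⟩
  have hh0 := hh_pos j
  have hh1 := hh_le j
  have hloc : ∀ t ∈ Ico (5 * hh j) (10 * hh j), EE k f j x ≤ 8 ^ n * localApprox k 1 f x t := by
    intro t ht
    rw [EE, localApprox_eq, localApprox_eq, ENNReal.mul_iInf_of_ne (by simp) (by simp)]
    refine iInf_mono fun P => ?_
    rw [ENNReal.mul_iInf_of_ne (by simp) (by simp)]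
    refine iInf_mono fun hP => ?_
    refine avg_mono _ (by linarith) (by linarith [ht.1]) (by linarith [ht.2]) ?_
    intro y hy
    rw [mem_closedBall] at *
    have := dist_triangle y (cen j x) x
    rw [dist_comm (cen j x)] at this
    linarith [dist_cen j x, ht.1]
  set B := (8 ^ n : ℝ≥0∞)⁻¹ * ENNReal.ofReal ((10 * hh j) ^ (-s)) * EE k f j x with hB
  have hI : B ^ q * 2⁻¹ ≤ ∫⁻ t in Set.Ioo (0:ℝ) 1, (ENNReal.ofReal (t ^ (-s)) * localApprox k 1 f x t) ^ q * ENNReal.ofReal t⁻¹ := by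
    calc B ^ q * 2⁻¹ = ∫⁻ t in Ico (5 * hh j) (10 * hh j), B ^ q * ENNReal.ofReal (10 * hh j)⁻¹ := by
          rw [setLIntegral_const, Real.volume_Ico, mul_assoc, ← ENNReal.ofReal_mul (by positivity)]
          congr 1
          rw [show (10 * hh j)⁻¹ * (10 * hh j - 5 * hh j) = 2⁻¹ by field_simp; norm_num, ENNReal.ofReal_inv_of_pos (by norm_num)]
          simp
      _ ≤ ∫⁻ t in Ico (5 * hh j) (10 * hh j), (ENNReal.ofReal (t ^ (-s)) * localApprox k 1 f x t) ^ q * ENNReal.ofReal t⁻¹ := by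
          refine setLIntegral_mono' measurableSet_Ico fun t ht => ?_
          have ht0 : 0 < t := by linarith [ht.1]
          refine mul_le_mul' (ENNReal.rpow_le_rpow ?_ hq0.le) (ENNReal.ofReal_le_ofReal ?_)
          · rw [hB, mul_comm _ (ENNReal.ofReal _), mul_assoc]
            refine mul_le_mul' (ENNReal.ofReal_le_ofReal ?_) ?_
            · exact Real.rpow_le_rpow_of_nonpos ht0 ht.2.le (by linarith)
            · rw [ENNReal.inv_mul_le_iff (by simp) (by finiteness)]
              exact hloc t ht
          · exact inv_anti₀ ht0 ht.2.le
      _ ≤ _ := lintegral_mono_set (fun t (ht : t ∈ Ico (5 * hh j) (10 * hh j)) => (⟨by linarith [ht.1], by linarith [ht.2]⟩ : t ∈ Ioo (0:ℝ) 1))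
  have h1 := ENNReal.rpow_le_rpow hI (by positivity : 0 ≤ 1 / q)
  rw [ENNReal.mul_rpow_of_nonneg _ _ (by positivity), ← ENNReal.rpow_mul, mul_one_div_cancel hq0.ne', ENNReal.rpow_one] at h1
  calc pw j (-s) * EE k f j x = (8 ^ n * ENNReal.ofReal (10 ^ s) * 2 ^ (1 / q)) * (B * 2⁻¹ ^ (1 / q)) := by
        have e1 : ENNReal.ofReal (10 ^ s) * ENNReal.ofReal ((10 * hh j) ^ (-s)) = pw j (-s) := by
          rw [pw, ← ENNReal.ofReal_mul (by positivity), Real.mul_rpow (by norm_num) hh0.le, ← mul_assoc, ← Real.rpow_add (by norm_num)]; simp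
        have e2 : (2 : ℝ≥0∞) ^ (1 / q) * 2⁻¹ ^ (1 / q) = 1 := by
          rw [← ENNReal.mul_rpow_of_nonneg _ _ (by positivity), ENNReal.mul_inv_cancel (by simp) (by simp), ENNReal.one_rpow]
        have e3 : (8 ^ n : ℝ≥0∞) * (8 ^ n : ℝ≥0∞)⁻¹ = 1 := ENNReal.mul_inv_cancel (by simp) (by finiteness)
        rw [hB, ← e1]
        calc _ = 1 * (ENNReal.ofReal (10 ^ s) * ENNReal.ofReal ((10 * hh j) ^ (-s)) * EE k f j x) * 1 := by ring
          _ = (8 ^ n * (8 ^ n)⁻¹) * (ENNReal.ofReal (10 ^ s) * ENNReal.ofReal ((10 * hh j) ^ (-s)) * EE k f j x) * (2 ^ (1 / q) * 2⁻¹ ^ (1 / q)) := by rw [e2, e3]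
          _ = _ := by ring
    _ ≤ _ := by gcongr

def BB {n : ℕ} (μ : Measure (Rn n)) (d : ℝ) (k : ℕ) (f : Rn n → ℝ) (j : ℕ) (x : Rn n) : ℝ≥0∞ :=
  ENNReal.ofReal ((hh j) ^ (-d)) * ∫⁻ w in closedBall x (2 * hh j), FF k f j w ∂μ

theorem BB_meas {n : ℕ} (μ : Measure (Rn n)) [SFinite μ] (d : ℝ) (k : ℕ) (f : Rn n → ℝ) (j : ℕ) : Measurable (BB μ d k f j) := by
  have hA : MeasurableSet {z : Rn n × Rn n | dist z.2 z.1 ≤ 2 * hh j} :=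
    (isClosed_le (continuous_snd.dist continuous_fst) continuous_const).measurableSet
  have h1 : Measurable fun x => ∫⁻ w, {z : Rn n × Rn n | dist z.2 z.1 ≤ 2 * hh j}.indicator (fun z => FF k f j z.2) (x, w) ∂μ :=
    Measurable.lintegral_prod_right' (((FF_meas k f j).comp measurable_snd).indicator hA)
  refine Measurable.const_mul ?_ _
  convert h1 using 2 with x
  rw [← lintegral_indicator isClosed_closedBall.measurableSet]
  rfl

theorem exists_shell {D : ℝ} (hD : 0 < D) (h0 : D ≤ hh 0) : ∃ j, hh (j + 1) < D ∧ D ≤ hh j := by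
  classical
  have hex : ∃ j, hh j < D := by
    have h := (hh_tendsto 0).mono_right nhdsWithin_le_nhds
    obtain ⟨i, hi⟩ := (h.eventually (gt_mem_nhds hD)).exists
    exact ⟨_, hi⟩
  have h1 := Nat.find_spec hex
  have hne : Nat.find hex ≠ 0 := by
    intro h
    rw [h] at h1
    linarith
  obtain ⟨j, hj⟩ := Nat.exists_eq_succ_of_ne_zero hne
  refine ⟨j, by rw [hj] at h1; exact h1, ?_⟩
  have := Nat.find_min hex (m := j) (by omega)
  linarith

theorem main_ineq {n : ℕ} (hn : 1 ≤ n) {d a b p q s : ℝ} (hd : (n : ℝ) - 1 < d) (hd0 : 0 < d) (hdn : d < n)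
    (hp : 1 < p) (hq : 1 ≤ q) (hs : ((n : ℝ) - d) / p < s) {μ : Measure (Rn n)} {S : Set (Rn n)}
    (hR : Reg μ S d a b) (hS : IsClosed S) (hne : S.Nonempty) : ∃ C : ℝ≥0∞, C ≠ ⊤ ∧ ∀ f : Rn n → ℝ, Measurable f → LocallyIntegrable f →
    (∀ᵐ w ∂μ, Tendsto (fun r : ℝ => ⨍ y in closedBall w r, f y) (𝓝[>] 0) (𝓝 0)) →
    ∫⁻ x, ENNReal.ofReal (|f x| ^ p / infDist x S ^ (s * p)) ≤ C * ((∫⁻ x, ENNReal.ofReal |f x| ^ p) +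
      ∫⁻ x, ((∫⁻ t in Set.Ioo (0:ℝ) 1, (ENNReal.ofReal (t ^ (-s)) * localApprox (⌊s⌋₊ + 1) 1 f x t) ^ q
        * ENNReal.ofReal t⁻¹) ^ (1 / q)) ^ p) := by
  have := hR.sfinite
  have hp0 : 0 < p := by linarith
  have hs0 : 0 < s := lt_of_le_of_lt (div_nonneg (by linarith) hp0.le) hs
  set γ := s * p - (n - d) with hγ
  have hγ0 : 0 < γ := by rw [div_lt_iff₀ hp0] at hs; linarith
  obtain ⟨C1, hC1, h1⟩ := pointwise_s1 ⌊s⌋₊ hn hd hd0 hR hS hne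
  obtain ⟨C2, hC2, h2⟩ := tonelli hd0 hp hR
  obtain ⟨M, C3, hC3, h3⟩ := transfer (p := p) hd0 hdn hR
  obtain ⟨C4, hC4, h4⟩ := hardy_sum (n := n) hp0 hγ0
  obtain ⟨C5, hC5, h5⟩ := GG_le (n := n) hs0 hq
  set cs := (1 - ENNReal.ofReal ((1 / 2 : ℝ) ^ s))⁻¹ with hcs
  have hcst : cs ≠ ⊤ := geo_ne_top hs0
  set k := ⌊s⌋₊ + 1 with hk
  set K := ENNReal.ofReal ((1 / 2 : ℝ) ^ (-(s * p))) * (C1 ^ p * 2 ^ (p - 1)) with hK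
  have hKt : K ≠ ⊤ := by rw [hK]; finiteness
  set C6 := C2 * (C4 * (C3 * (M + 1))) with hC6
  have hC6t : C6 ≠ ⊤ := by
    refine ENNReal.mul_ne_top hC2 (ENNReal.mul_ne_top hC4 (ENNReal.mul_ne_top hC3 (by finiteness)))
  refine ⟨pw 0 (-(s * p)) + (K * cs ^ p + K * C6) * C5 ^ p, ?_, ?_⟩
  · have := pw_ne_top 0 (-(s * p)); finiteness
  intro f hf hfi htr
  have hG := GG_meas k s f
  have hptw : ∀ᵐ x : Rn n, ENNReal.ofReal (|f x| ^ p / infDist x S ^ (s * p)) ≤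
      pw 0 (-(s * p)) * ENNReal.ofReal |f x| ^ p + (K * cs ^ p * GG k s f x ^ p + K * ∑' j, pw j (-(s * p)) * BB μ d k f j x ^ p) := by
    filter_upwards [leb_pt f hfi] with x hx
    have key : ∀ h : ℕ, hh h ≤ infDist x S → ENNReal.ofReal (|f x| ^ p / infDist x S ^ (s * p)) ≤ pw h (-(s * p)) * ENNReal.ofReal |f x| ^ p := by
      intro h hD
      rw [pw, ENNReal.ofReal_rpow_of_nonneg (abs_nonneg _) hp0.le, ← ENNReal.ofReal_mul (Real.rpow_nonneg (hh_pos h).le _)]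
      refine ENNReal.ofReal_le_ofReal ?_
      rw [Real.rpow_neg (hh_pos h).le, div_eq_mul_inv, mul_comm]
      have h0 : 0 < hh h ^ (s * p) := Real.rpow_pos_of_pos (hh_pos h) _
      gcongr
      exact (hh_pos h).le
    rcases (infDist_nonneg (x := x) (s := S)).eq_or_lt with h0 | h0
    · rw [← h0, Real.zero_rpow (by positivity)]; simp
    rcases lt_or_ge (hh 0) (infDist x S) with h0' | h0'
    · exact (key 0 h0'.le).trans le_self_add
    · obtain ⟨j, hj1, hj2⟩ := exists_shell h0 h0'
      refine le_trans ?_ le_add_self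
      refine (key (j + 1) hj1.le).trans ?_
      have hpt := h1 f hf hfi htr x hx j hj2
      have hpt2 : ENNReal.ofReal |f x| ^ p ≤ C1 ^ p * (2 ^ (p - 1) * (FF k f j x ^ p + BB μ d k f j x ^ p)) := by
        refine (ENNReal.rpow_le_rpow hpt hp0.le).trans ?_
        rw [ENNReal.mul_rpow_of_nonneg _ _ hp0.le]
        exact mul_le_mul' le_rfl (ENNReal.rpow_add_le_mul_rpow_add_rpow _ _ hp.le)
      have hFG : pw j (-(s * p)) * FF k f j x ^ p ≤ cs ^ p * GG k s f x ^ p := by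
        rw [← neg_mul, ← pw_rpow, ← ENNReal.mul_rpow_of_nonneg _ _ hp0.le, ← ENNReal.mul_rpow_of_nonneg _ _ hp0.le]
        exact ENNReal.rpow_le_rpow (FF_le_GG k s f j x) hp0.le
      rw [pw_shift, pow_one]
      calc _ ≤ ENNReal.ofReal ((1 / 2 : ℝ) ^ (-(s * p))) * pw j (-(s * p)) * (C1 ^ p * (2 ^ (p - 1) * (FF k f j x ^ p + BB μ d k f j x ^ p))) := by gcongr
        _ = K * (pw j (-(s * p)) * FF k f j x ^ p) + K * (pw j (-(s * p)) * BB μ d k f j x ^ p) := by rw [hK]; ring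
        _ ≤ K * (cs ^ p * GG k s f x ^ p) + K * ∑' j, pw j (-(s * p)) * BB μ d k f j x ^ p := by
          gcongr
          exact ENNReal.le_tsum (f := fun j => pw j (-(s * p)) * BB μ d k f j x ^ p) j
        _ = _ := by ring
  have hGp : Measurable fun x => GG k s f x ^ p := hG.pow_const p
  have hBp : ∀ j, Measurable fun x => pw j (-(s * p)) * BB μ d k f j x ^ p := fun j => ((BB_meas μ d k f j).pow_const p).const_mul _
  have hfp : Measurable fun x => ENNReal.ofReal |f x| ^ p := (ENNReal.measurable_ofReal.comp hf.abs).pow_const p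
  have hsum : ∑' j, pw j (-(s * p)) * ∫⁻ x, BB μ d k f j x ^ p ≤ C6 * ∫⁻ x, GG k s f x ^ p := by
    calc _ ≤ ∑' j, C2 * (pw j (-γ) * ∫⁻ w, FF k f j w ^ p ∂μ) := by
          refine ENNReal.tsum_le_tsum fun j => ?_
          refine (mul_le_mul' le_rfl (h2 (FF k f j) (FF_meas k f j) j)).trans (le_of_eq ?_)
          change pw j (-(s * p)) * (C2 * (pw j ((n : ℝ) - d) * _)) = _
          rw [show -γ = -(s * p) + ((n : ℝ) - d) by rw [hγ]; ring, pw_add]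
          ring
      _ = C2 * ∑' j, pw j (-γ) * ∫⁻ w, FF k f j w ^ p ∂μ := ENNReal.tsum_mul_left
      _ ≤ C2 * (C4 * ∑' l, pw l (-γ) * ∫⁻ w, EE k f l w ^ p ∂μ) := by
          gcongr
          exact h4 μ (EE k f) (EE_meas k f)
      _ ≤ C2 * (C4 * ∑' l, C3 * ∫⁻ x in TT S M l, GG k s f x ^ p) := by
          refine mul_le_mul' le_rfl (mul_le_mul' le_rfl (ENNReal.tsum_le_tsum fun l => ?_))
          refine (mul_le_mul' le_rfl (h3 k f l)).trans ?_
          change pw l (-γ) * (C3 * (pw l (d - (n : ℝ)) * _)) ≤ _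
          calc _ = C3 * ((pw l (-γ) * pw l (d - (n : ℝ))) * ∫⁻ x in TT S M l, EE k f l x ^ p) := by ring
            _ ≤ _ := by
              refine mul_le_mul' le_rfl ?_
              rw [← pw_add, show -γ + (d - (n : ℝ)) = -s * p by rw [hγ]; ring, ← pw_rpow, ← lintegral_const_mul _ ((EE_meas k f l).pow_const p)]
              refine lintegral_mono fun x => ?_
              rw [← ENNReal.mul_rpow_of_nonneg _ _ hp0.le]
              exact ENNReal.rpow_le_rpow (le_iSup (fun j => pw j (-s) * EE k f j x) l) hp0.le
      _ ≤ C2 * (C4 * (C3 * ((M + 1) * ∫⁻ x, GG k s f x ^ p))) := by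
          rw [ENNReal.tsum_mul_left]
          gcongr
          exact sum_TT S M hGp
      _ = _ := by rw [hC6]; ring
  have hGY : ∫⁻ x, GG k s f x ^ p ≤ C5 ^ p * ∫⁻ x, ((∫⁻ t in Set.Ioo (0:ℝ) 1, (ENNReal.ofReal (t ^ (-s)) * localApprox k 1 f x t) ^ q
        * ENNReal.ofReal t⁻¹) ^ (1 / q)) ^ p := by
    rw [← lintegral_const_mul' _ _ (ENNReal.rpow_ne_top_of_nonneg hp0.le hC5)]
    refine lintegral_mono fun x => ?_
    simp only
    rw [← ENNReal.mul_rpow_of_nonneg _ _ hp0.le]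
    exact ENNReal.rpow_le_rpow (h5 k f x) hp0.le
  refine (lintegral_mono_ae hptw).trans ?_
  rw [lintegral_add_left (hfp.const_mul _), lintegral_add_left (hGp.const_mul _), lintegral_const_mul _ hfp, lintegral_const_mul _ hGp,
    lintegral_const_mul _ (Measurable.ennreal_tsum hBp), lintegral_tsum (fun j => (hBp j).aemeasurable)]
  have e : ∀ j, ∫⁻ x, pw j (-(s * p)) * BB μ d k f j x ^ p = pw j (-(s * p)) * ∫⁻ x, BB μ d k f j x ^ p :=
    fun j => lintegral_const_mul _ ((BB_meas μ d k f j).pow_const p)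
  simp only [e]
  set X := ∫⁻ x, ENNReal.ofReal |f x| ^ p
  set Y := ∫⁻ x, ((∫⁻ t in Set.Ioo (0:ℝ) 1, (ENNReal.ofReal (t ^ (-s)) * localApprox k 1 f x t) ^ q
        * ENNReal.ofReal t⁻¹) ^ (1 / q)) ^ p
  calc _ ≤ pw 0 (-(s * p)) * X + (K * cs ^ p * (C5 ^ p * Y) + K * (C6 * (C5 ^ p * Y))) := by
        gcongr
        exact hsum.trans (mul_le_mul' le_rfl hGY)
    _ = pw 0 (-(s * p)) * (X + 0) + (K * cs ^ p + K * C6) * C5 ^ p * (0 + Y) := by ring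
    _ ≤ pw 0 (-(s * p)) * (X + Y) + (K * cs ^ p + K * C6) * C5 ^ p * (X + Y) := by
        gcongr
        · exact zero_le
        · exact zero_le
    _ = _ := by ring

/-- **Hardy inequality for Triebel–Lizorkin spaces** (Theorem 3.9, the main result).
If `S ⊆ ℝⁿ` (`n ≥ 2`) is a `d`-set with `n−1 < d < n`, `1 < p < ∞`, `1 ≤ q < ∞`, and
`s > (n−d)/p`, then there is `c > 0` such that every `f ∈ F^s_{pq}(ℝⁿ)` with
`Tr_S f = 0` ℋᵈ-a.e. satisfies
`(∫ |f(x)|^p / dist(x,S)^{sp} dx)^{1/p} ≤ c ‖f‖_{F^s_{pq}(ℝⁿ)}`. -/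
theorem hardy_triebel_lizorkin {n : ℕ} (hn : 2 ≤ n) (S : Set (Rn n)) (d C₀ : ℝ)
    (hS : IsDSet S d C₀) (hd1 : (n : ℝ) - 1 < d) (hd2 : d < n)
    (p q s : ℝ) (hp : 1 < p) (hq : 1 ≤ q) (hs : ((n : ℝ) - d) / p < s) :
    ∃ c > 0, ∀ f : Rn n → ℝ, Measurable f → tlNorm s p q f < ⊤ →
      TraceZero S d f →
      hardyLHS S s p f ≤ ENNReal.ofReal c * tlNorm s p q f := by
  rcases S.eq_empty_or_nonempty with rfl | hne
  · refine ⟨1, one_pos, fun f _ _ _ => ?_⟩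
    have hp0 : 0 < p := by linarith
    have hs0 : 0 < s := lt_of_le_of_lt (div_nonneg (by linarith) hp0.le) hs
    have hsp : s * p ≠ 0 := (mul_pos hs0 hp0).ne'
    have : hardyLHS (∅ : Set (Rn n)) s p f = 0 := by
      unfold hardyLHS
      simp [Real.zero_rpow hsp, hp0]
    rw [this]
    exact zero_le
  · obtain ⟨hcl, hC1, hreg⟩ := hS
    have hn2 : (2 : ℝ) ≤ n := by exact_mod_cast hn
    have hd0 : 0 < d := by linarith
    have hp0 : 0 < p := by linarith
    have hR : Reg ((μH[d] : Measure (Rn n)).restrict S) S d C₀⁻¹ C₀ := by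
      refine ⟨?_, by positivity, by positivity, ?_⟩
      · rw [Measure.restrict_apply hcl.measurableSet.compl]; simp
      · intro w hw r hr hr1
        rw [Measure.restrict_apply isClosed_closedBall.measurableSet]
        exact hreg w hw r hr hr1
    obtain ⟨C, hC, h⟩ := main_ineq (by omega) hd1 hd0 hd2 hp hq hs hR hcl hne
    have hCp : C ^ (1 / p) ≠ ⊤ := ENNReal.rpow_ne_top_of_nonneg (by positivity) hC
    refine ⟨(C ^ (1 / p)).toReal + 1, by positivity, fun f hf hfin htr => ?_⟩
    have hX : (∫⁻ x, ENNReal.ofReal |f x| ^ p) ^ (1 / p) < ⊤ := lt_of_le_of_lt le_self_add hfin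
    have hX2 : ∫⁻ x, ENNReal.ofReal |f x| ^ p < ⊤ := by
      rwa [ENNReal.rpow_lt_top_iff_of_pos (by positivity)] at hX
    have hmem : MemLp f (ENNReal.ofReal p) := by
      refine ⟨hf.aestronglyMeasurable, ?_⟩
      rw [eLpNorm_lt_top_iff_lintegral_rpow_enorm_lt_top (by simpa using hp0) (by simp), ENNReal.toReal_ofReal hp0.le]
      simpa only [Real.enorm_eq_ofReal_abs] using hX2
    have hfi : LocallyIntegrable f := hmem.locallyIntegrable (by
      rw [← ENNReal.ofReal_one]; exact ENNReal.ofReal_le_ofReal hp.le)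
    have h1 := h f hf hfi htr
    unfold hardyLHS tlNorm
    refine (ENNReal.rpow_le_rpow h1 (by positivity)).trans ?_
    rw [ENNReal.mul_rpow_of_nonneg _ _ (by positivity)]
    refine mul_le_mul' ?_ (ENNReal.rpow_add_le_add_rpow _ _ (by positivity) ?_)
    · rw [ENNReal.ofReal_add ENNReal.toReal_nonneg zero_le_one, ENNReal.ofReal_toReal hCp]
      exact le_self_add
    · rw [div_le_one hp0]; exact hp.le
end
end
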